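/- For every N ≥ 1 and every n ∈ ℕ, the following are equivalent: (1) there exists an ℝ-linear map f : ℝⁿ → M(N,ℝ) such that f(v) is symmetric and f(v)² = ‖v‖² I_N for all v ∈ ℝⁿ; (2) there exists an ℝ-linear map f : ℝⁿ → M(N,ℝ) such that every f(v) is symmetric and f(v) is invertible for every nonzero v; (3) n ≤ ρ(N/2) + 1. (Entry 𝔤 = 𝔤𝔩(N,ℝ) of the Hurwitz–Radon value theorem: ρ⁽¹⁾ = ρ⁽²⁾ = ρ(N/2)+1.) -/

import Mathlib

open Matrix

/-- Extended Hurwitz–Radon number: writing the 2-adic valuation of `t` as `4a + b`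
with `a ∈ ℤ` and `b ∈ {0,1,2,3}`, `ρ(t) := 8a + 2^b`. -/
noncomputable def hrRho (t : ℚ) : ℤ :=
  8 * (padicValRat 2 t / 4) + 2 ^ (padicValRat 2 t % 4).toNat

/-!
For the lower bound, orthogonal Clifford modules of small dimension are written down with Pauli
matrices and quaternions, and tensoring with the Clifford module of dimension `16` adds eight
generators.

For the upper bound, let `A₀, …, Aₙ` be symmetric `N × N` matrices all of whose nonzero linear
combinations are invertible, and let a Clifford module of dimension `c` with `n` generators and an
action of the quaternions be given. Doubling the module and tensoring it with the `Aᵢ` yields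
families `α` and `e` of matrices of size `M = 2 N c`, each `αᵢ` anticommuting with each `eⱼ`, and
the Dirac operator `D = ∑ (eᵢ ∂ᵢ + xᵢ αᵢ)` on `ℝⁿ⁺¹`. In place of its index we count dimensions in
the Hermite basis, where `xᵢ` and `∂ᵢ` are combinations of creation and annihilation operators and
`D` exchanges even and odd degrees: for large `d`, the space of odd square-summable `y` with
`D y = 0` in all even degrees larger than `d` has a finite dimension `k` that is constant along
paths of invertible pencils. A direct sum of copies of `α` and `-α` can be deformed into a Clifford
family, for which the dimension is explicit: the result is
`2 ^ (n + 1) * k + M = 2 ^ (n + 1) * r * M`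
for some integer `r`. The quaternions act on the space, so `4` divides `k`, and hence `2 ^ (n + 2)`
divides `N * c`. Choosing the Clifford modules of smallest dimension gives the bound on `n` in terms
of the `2`-adic valuation of `N`.
-/

/-! ### Clifford modules -/

section CliffordFamilies

open scoped Kronecker

variable {R : Type*} [CommRing R] {ι ι' κ κ' : Type*} [Fintype κ] [Fintype κ'] {s t : R}

theorem kronecker_mul_kronecker_anticomm_left {A B : Matrix κ κ R} {C D : Matrix κ' κ' R}
    (hAB : A * B = -(B * A)) (hCD : Commute C D) :
    A ⊗ₖ C * B ⊗ₖ D = -(B ⊗ₖ D * A ⊗ₖ C) := by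
  rw [← mul_kronecker_mul, ← mul_kronecker_mul, hAB, hCD.eq]
  ext; simp

theorem kronecker_mul_kronecker_anticomm_right {A B : Matrix κ κ R} {C D : Matrix κ' κ' R}
    (hAB : Commute A B) (hCD : C * D = -(D * C)) :
    A ⊗ₖ C * B ⊗ₖ D = -(B ⊗ₖ D * A ⊗ₖ C) := by
  rw [← mul_kronecker_mul, ← mul_kronecker_mul, hAB.eq, hCD]
  ext; simp

theorem commute_kronecker {A B : Matrix κ κ R} {C D : Matrix κ' κ' R}
    (hAB : Commute A B) (hCD : Commute C D) : Commute (A ⊗ₖ C) (B ⊗ₖ D) := by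
  rw [commute_iff_eq, ← mul_kronecker_mul, ← mul_kronecker_mul, hAB.eq, hCD.eq]

theorem commute_kronecker_of_anticomm {A B : Matrix κ κ R} {C D : Matrix κ' κ' R}
    (hAB : A * B = -(B * A)) (hCD : C * D = -(D * C)) : Commute (A ⊗ₖ C) (B ⊗ₖ D) := by
  rw [commute_iff_eq, ← mul_kronecker_mul, ← mul_kronecker_mul, hAB, hCD]
  ext; simp

variable [DecidableEq κ'] [DecidableEq κ]

/-- A matrix `ω` with `ωᵀ = s • ω` and `ω² = s`. For `s = 1` this is an orthogonal symmetry, for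
`s = -1` an orthogonal complex structure. -/
structure IsCliffordUnit (s : R) (ω : Matrix κ κ R) : Prop where
  transpose_eq : ωᵀ = s • ω
  mul_self : ω * ω = s • 1

/-- Pairwise anticommuting matrices `E i` with `(E i)ᵀ = s • E i` and `(E i)² = s`: over `ℝ` and for
`s = ±1`, an orthogonal representation of the Clifford algebra of a definite form of sign `s`. -/
structure IsCliffordFamily (s : R) (E : ι → Matrix κ κ R) : Prop where
  isCliffordUnit : ∀ i, IsCliffordUnit s (E i)
  anticomm : Pairwise fun i j => E i * E j = -(E j * E i)

theorem IsCliffordUnit.one : IsCliffordUnit (1 : R) (1 : Matrix κ κ R) :=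
  ⟨by rw [transpose_one, one_smul], by rw [mul_one, one_smul]⟩

theorem IsCliffordUnit.kronecker {ω : Matrix κ κ R} {ω' : Matrix κ' κ' R}
    (hω : IsCliffordUnit s ω) (hω' : IsCliffordUnit t ω') : IsCliffordUnit (s * t) (ω ⊗ₖ ω') where
  transpose_eq := by
    rw [← kroneckerMap_transpose, hω.transpose_eq, hω'.transpose_eq, smul_kronecker, kronecker_smul,
      smul_smul]
  mul_self := by
    rw [← mul_kronecker_mul, hω.mul_self, hω'.mul_self, smul_kronecker, kronecker_smul, smul_smul,
      one_kronecker_one]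

theorem IsCliffordUnit.transpose_mul_self {ω : Matrix κ κ R} (hω : IsCliffordUnit s ω)
    (hs : s * s = 1) : ωᵀ * ω = 1 := by
  rw [hω.transpose_eq, smul_mul_assoc, hω.mul_self, smul_smul, hs, one_smul]

namespace IsCliffordFamily

variable {E : ι → Matrix κ κ R} {G : ι' → Matrix κ' κ' R} {ω : Matrix κ' κ' R}

theorem const {ω : Matrix κ κ R} (hω : IsCliffordUnit s ω) :
    IsCliffordFamily s fun _ : Unit => ω :=
  ⟨fun _ => hω, fun _ _ h => (h rfl).elim⟩

theorem comp (hE : IsCliffordFamily s E) {f : ι' → ι} (hf : f.Injective) :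
    IsCliffordFamily s (E ∘ f) :=
  ⟨fun _ => hE.isCliffordUnit _, fun _ _ h => hE.anticomm (hf.ne h)⟩

theorem reindex (hE : IsCliffordFamily s E) (ψ : κ ≃ κ') :
    IsCliffordFamily s fun i => reindexAlgEquiv R R ψ (E i) where
  isCliffordUnit i :=
    { transpose_eq := by
        rw [coe_reindexAlgEquiv, transpose_reindex, (hE.isCliffordUnit i).transpose_eq,
          ← coe_reindexAlgEquiv R R, map_smul]
      mul_self := by rw [← map_mul, (hE.isCliffordUnit i).mul_self, map_smul, map_one] }
  anticomm i j h := by beta_reduce; rw [← map_mul, hE.anticomm h, map_neg, map_mul]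

theorem sumElim {F : ι' → Matrix κ κ R} (hE : IsCliffordFamily s E) (hF : IsCliffordFamily s F)
    (h : ∀ i j, E i * F j = -(F j * E i)) : IsCliffordFamily s (Sum.elim E F) where
  isCliffordUnit := Sum.rec hE.isCliffordUnit hF.isCliffordUnit
  anticomm := by
    rintro (i | i) (j | j) hij
    · exact hE.anticomm (Sum.inl_injective.ne_iff.1 hij)
    · exact h i j
    · exact neg_eq_iff_eq_neg.1 (h j i).symm
    · exact hF.anticomm (Sum.inr_injective.ne_iff.1 hij)

theorem kronecker_right (hE : IsCliffordFamily s E) (hω : IsCliffordUnit t ω) :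
    IsCliffordFamily (s * t) fun i => E i ⊗ₖ ω :=
  ⟨fun i => (hE.isCliffordUnit i).kronecker hω,
    fun _ _ h => kronecker_mul_kronecker_anticomm_left (hE.anticomm h) (.refl _)⟩

theorem kronecker_left (hE : IsCliffordFamily s E) (hω : IsCliffordUnit t ω) :
    IsCliffordFamily (t * s) fun i => ω ⊗ₖ E i :=
  ⟨fun i => hω.kronecker (hE.isCliffordUnit i),
    fun _ _ h => kronecker_mul_kronecker_anticomm_right (.refl _) (hE.anticomm h)⟩

theorem kronecker_sumElim (hE : IsCliffordFamily s E) (hω : IsCliffordUnit t ω)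
    (hG : IsCliffordFamily (s * t) G) (h : ∀ j, ω * G j = -(G j * ω)) :
    IsCliffordFamily (s * t)
      (Sum.elim (fun i => E i ⊗ₖ ω) fun j => (1 : Matrix κ κ R) ⊗ₖ G j) :=
  (hE.kronecker_right hω).sumElim (by simpa only [one_mul] using hG.kronecker_left .one)
    fun _ j => kronecker_mul_kronecker_anticomm_right (.one_right _) (h j)

end IsCliffordFamily

end CliffordFamilies

section SmallCliffordFamilies

open scoped Kronecker

/-- The real Pauli matrix exchanging the two coordinates. -/
def pauliX : Matrix (Fin 2) (Fin 2) ℝ := !![0, 1; 1, 0]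

/-- The rotation by a right angle, which is `-i` times the second Pauli matrix. -/
def pauliY : Matrix (Fin 2) (Fin 2) ℝ := !![0, -1; 1, 0]

/-- The diagonal Pauli matrix. -/
def pauliZ : Matrix (Fin 2) (Fin 2) ℝ := !![1, 0; 0, -1]

theorem isCliffordUnit_pauliX : IsCliffordUnit 1 pauliX := by
  constructor <;> ext i j <;> fin_cases i <;> fin_cases j <;> simp [pauliX]

theorem isCliffordUnit_pauliY : IsCliffordUnit (-1) pauliY := by
  constructor <;> ext i j <;> fin_cases i <;> fin_cases j <;> simp [pauliY]

theorem isCliffordUnit_pauliZ : IsCliffordUnit 1 pauliZ := by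
  constructor <;> ext i j <;> fin_cases i <;> fin_cases j <;> simp [pauliZ]

theorem pauliX_mul_pauliY : pauliX * pauliY = -(pauliY * pauliX) := by
  ext i j; fin_cases i <;> fin_cases j <;> simp [pauliX, pauliY]

theorem pauliX_mul_pauliZ : pauliX * pauliZ = -(pauliZ * pauliX) := by
  ext i j; fin_cases i <;> fin_cases j <;> simp [pauliX, pauliZ]

theorem pauliY_mul_pauliZ : pauliY * pauliZ = -(pauliZ * pauliY) := by
  ext i j; fin_cases i <;> fin_cases j <;> simp [pauliY, pauliZ]

theorem exists_isCliffordUnit_anticomm_pauliX {s : ℝ} (hs : s = 1 ∨ s = -1) :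
    ∃ ω ω' : Matrix (Fin 2) (Fin 2) ℝ, IsCliffordUnit s ω ∧ IsCliffordUnit (-s) ω' ∧
      pauliX * ω = -(ω * pauliX) ∧ pauliX * ω' = -(ω' * pauliX) ∧ ω' * ω = -(ω * ω') := by
  rcases hs with rfl | rfl
  · exact ⟨pauliZ, pauliY, isCliffordUnit_pauliZ, isCliffordUnit_pauliY, pauliX_mul_pauliZ,
      pauliX_mul_pauliY, pauliY_mul_pauliZ⟩
  · exact ⟨pauliY, pauliZ, isCliffordUnit_pauliY, by simpa using isCliffordUnit_pauliZ,
      pauliX_mul_pauliY, pauliX_mul_pauliZ, neg_eq_iff_eq_neg.1 pauliY_mul_pauliZ.symm⟩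

/-- The symmetric pair of real Pauli matrices. -/
def pauliXZ : Unit ⊕ Unit → Matrix (Fin 2) (Fin 2) ℝ :=
  Sum.elim (fun _ => pauliX) fun _ => pauliZ

theorem isCliffordFamily_pauliXZ : IsCliffordFamily 1 pauliXZ :=
  (IsCliffordFamily.const isCliffordUnit_pauliX).sumElim (.const isCliffordUnit_pauliZ)
    fun _ _ => pauliX_mul_pauliZ

theorem pauliY_mul_pauliXZ (j : Unit ⊕ Unit) : pauliY * pauliXZ j = -(pauliXZ j * pauliY) := by
  rcases j with _ | _
  · exact neg_eq_iff_eq_neg.1 pauliX_mul_pauliY.symm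
  · exact pauliY_mul_pauliZ

/-- Left multiplications by the imaginary units of the quaternions, on `ℝ² ⊗ ℝ² = ℝ⁴`. -/
def quaternionLeft : Unit ⊕ Unit ⊕ Unit → Matrix (Fin 2 × Fin 2) (Fin 2 × Fin 2) ℝ :=
  Sum.elim (fun _ => pauliY ⊗ₖ 1) fun j => pauliXZ j ⊗ₖ pauliY

/-- Right multiplications by the imaginary units of the quaternions, on `ℝ² ⊗ ℝ² = ℝ⁴`. -/
def quaternionRight : Unit ⊕ Unit ⊕ Unit → Matrix (Fin 2 × Fin 2) (Fin 2 × Fin 2) ℝ :=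
  Sum.elim (fun _ => 1 ⊗ₖ pauliY) fun j => pauliY ⊗ₖ pauliXZ j

theorem isCliffordFamily_quaternionLeft : IsCliffordFamily (-1) quaternionLeft :=
  IsCliffordFamily.sumElim
    (.const (by simpa using isCliffordUnit_pauliY.kronecker (κ' := Fin 2) .one))
    (by simpa using isCliffordFamily_pauliXZ.kronecker_right isCliffordUnit_pauliY)
    fun _ j => kronecker_mul_kronecker_anticomm_left (pauliY_mul_pauliXZ j) (.one_left _)

theorem isCliffordFamily_quaternionRight : IsCliffordFamily (-1) quaternionRight :=
  IsCliffordFamily.sumElim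
    (.const (by simpa using IsCliffordUnit.one.kronecker (κ := Fin 2) isCliffordUnit_pauliY))
    (by simpa using isCliffordFamily_pauliXZ.kronecker_left isCliffordUnit_pauliY)
    fun _ j => kronecker_mul_kronecker_anticomm_right (.one_left _) (pauliY_mul_pauliXZ j)

theorem commute_quaternionLeft_quaternionRight (i j : Unit ⊕ Unit ⊕ Unit) :
    Commute (quaternionLeft i) (quaternionRight j) := by
  rcases i with _ | i <;> rcases j with _ | j
  · exact commute_kronecker (.one_right _) (.one_left _)
  · exact commute_kronecker (.refl _) (.one_left _)
  · exact commute_kronecker (.one_right _) (.refl _)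
  · exact commute_kronecker_of_anticomm (neg_eq_iff_eq_neg.1 (pauliY_mul_pauliXZ i).symm)
      (pauliY_mul_pauliXZ j)

/-- Seven anticommuting complex structures on `ℍ ⊗ ℝ² = ℝ⁸`, equivalent to the multiplications by
the imaginary units of the octonions. -/
def octonionUnits : ((Unit ⊕ Unit ⊕ Unit) ⊕ Unit) ⊕ (Unit ⊕ Unit ⊕ Unit) →
    Matrix ((Fin 2 × Fin 2) × Fin 2) ((Fin 2 × Fin 2) × Fin 2) ℝ :=
  Sum.elim (Sum.elim (fun i => quaternionLeft i ⊗ₖ pauliX) fun _ => 1 ⊗ₖ pauliY)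
    fun i => quaternionRight i ⊗ₖ pauliZ

theorem isCliffordFamily_octonionUnits : IsCliffordFamily (-1) octonionUnits := by
  have hleft := isCliffordFamily_quaternionLeft.kronecker_sumElim isCliffordUnit_pauliX
    (by simpa using .const isCliffordUnit_pauliY) fun _ : Unit => pauliX_mul_pauliY
  have hright := isCliffordFamily_quaternionRight.kronecker_right isCliffordUnit_pauliZ
  rw [mul_one] at hleft hright
  refine hleft.sumElim hright ?_
  rintro (i | _) j
  · exact kronecker_mul_kronecker_anticomm_right (commute_quaternionLeft_quaternionRight i j)
      pauliX_mul_pauliZ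
  · exact kronecker_mul_kronecker_anticomm_right (.one_left _) pauliY_mul_pauliZ

theorem exists_isCliffordFamily_card_eight {s : ℝ} (hs : s = 1 ∨ s = -1) :
    ∃ (ω : Matrix (((Fin 2 × Fin 2) × Fin 2) × Fin 2) (((Fin 2 × Fin 2) × Fin 2) × Fin 2) ℝ)
      (G : (((Unit ⊕ Unit ⊕ Unit) ⊕ Unit) ⊕ (Unit ⊕ Unit ⊕ Unit)) ⊕ Unit → Matrix _ _ ℝ),
      IsCliffordUnit 1 ω ∧ IsCliffordFamily s G ∧ ∀ j, ω * G j = -(G j * ω) := by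
  obtain ⟨C, B, hC, hB, hXC, hXB, hBC⟩ := exists_isCliffordUnit_anticomm_pauliX hs
  have hG := isCliffordFamily_octonionUnits.kronecker_sumElim hB
    (by simpa using .const hC) fun _ : Unit => hBC
  refine ⟨1 ⊗ₖ pauliX, _, by simpa using IsCliffordUnit.one.kronecker isCliffordUnit_pauliX,
    by simpa using hG, ?_⟩
  rintro (_ | _)
  · exact kronecker_mul_kronecker_anticomm_right (.one_left _) hXB
  · exact kronecker_mul_kronecker_anticomm_right (.one_left _) hXC

/-- The existence of an orthogonal Clifford module of dimension `c`: a Clifford family of `n`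
matrices of sign `s`, together with `q` anticommuting complex structures commuting with it
(for `q = 2`, an action of the quaternions). -/
def HasCliffordModule (s : ℝ) (n c q : ℕ) : Prop :=
  ∃ (E : Fin n → Matrix (Fin c) (Fin c) ℝ) (K : Fin q → Matrix (Fin c) (Fin c) ℝ),
    IsCliffordFamily s E ∧ IsCliffordFamily (-1) K ∧ ∀ i j, Commute (E i) (K j)

namespace HasCliffordModule

variable {s : ℝ} {n c q : ℕ}

theorem of_card {ι τ κ : Type*} [Fintype ι] [Fintype τ] [Fintype κ] [DecidableEq κ]
    {E : ι → Matrix κ κ ℝ} {K : τ → Matrix κ κ ℝ} (hE : IsCliffordFamily s E)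
    (hK : IsCliffordFamily (-1) K) (hEK : ∀ i j, Commute (E i) (K j)) (hn : Fintype.card ι = n)
    (hc : Fintype.card κ = c) (hq : Fintype.card τ = q) : HasCliffordModule s n c q :=
  ⟨_, _, (hE.comp (Fintype.equivFinOfCardEq hn).symm.injective).reindex
      (Fintype.equivFinOfCardEq hc),
    (hK.comp (Fintype.equivFinOfCardEq hq).symm.injective).reindex (Fintype.equivFinOfCardEq hc),
    fun _ _ => (hEK _ _).map (reindexAlgEquiv ℝ ℝ _)⟩

theorem of_isCliffordFamily {ι κ : Type*} [Fintype ι] [Fintype κ] [DecidableEq κ]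
    {E : ι → Matrix κ κ ℝ} (hE : IsCliffordFamily s E) (hn : Fintype.card ι = n)
    (hc : Fintype.card κ = c) : HasCliffordModule s n c 0 :=
  of_card (τ := Empty) (K := Empty.elim) hE ⟨Empty.rec, Empty.rec⟩ (fun _ => Empty.rec) hn hc rfl

theorem mono {n' q' : ℕ} (h : HasCliffordModule s n c q) (hn : n' ≤ n) (hq : q' ≤ q) :
    HasCliffordModule s n' c q' := by
  obtain ⟨E, K, hE, hK, hEK⟩ := h
  exact ⟨_, _, hE.comp (Fin.castLE_injective hn), hK.comp (Fin.castLE_injective hq),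
    fun _ _ => hEK _ _⟩

theorem mul_right (h : HasCliffordModule s n c q) (m : ℕ) : HasCliffordModule s n (c * m) q := by
  obtain ⟨E, K, hE, hK, hEK⟩ := h
  have hE' := hE.kronecker_right (κ' := Fin m) .one
  have hK' := hK.kronecker_right (κ' := Fin m) .one
  rw [mul_one] at hE' hK'
  exact of_card hE' hK' (fun i j => commute_kronecker (hEK i j) (.refl _)) (by simp) (by simp)
    (by simp)

theorem add_eight (hs : s = 1 ∨ s = -1) (h : HasCliffordModule s n c q) :
    HasCliffordModule s (n + 8) (c * 2 ^ 4) q := by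
  obtain ⟨E, K, hE, hK, hEK⟩ := h
  obtain ⟨ω, G, hω, hG, hωG⟩ := exists_isCliffordFamily_card_eight hs
  have hEG := hE.kronecker_sumElim hω (by simpa using hG) hωG
  have hK' := hK.kronecker_right (κ' := ((Fin 2 × Fin 2) × Fin 2) × Fin 2) .one
  rw [mul_one] at hEG hK'
  refine of_card hEG hK' ?_ (by simp) (by simp) (by simp)
  rintro (i | i) j
  · exact commute_kronecker (hEK i j) (.one_right _)
  · exact commute_kronecker (.one_left _) (.one_right _)

theorem add_eight_mul (hs : s = 1 ∨ s = -1) (h : HasCliffordModule s n c q) (m : ℕ) :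
    HasCliffordModule s (n + 8 * m) (c * 2 ^ (4 * m)) q := by
  induction m with
  | zero => simpa using h
  | succ m ih => simpa only [mul_add_one, pow_add, mul_assoc, add_assoc] using add_eight hs ih

end HasCliffordModule

theorem hasCliffordModule_one_one_one : HasCliffordModule 1 1 1 0 :=
  .of_isCliffordFamily (.const (.one (κ := Unit))) rfl rfl

theorem hasCliffordModule_one_two_two : HasCliffordModule 1 2 2 0 :=
  .of_isCliffordFamily isCliffordFamily_pauliXZ (by simp) (by simp)

theorem hasCliffordModule_one_three_four : HasCliffordModule 1 3 4 0 := by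
  have hE := (IsCliffordFamily.const isCliffordUnit_pauliY).kronecker_sumElim
    isCliffordUnit_pauliY (by simpa using isCliffordFamily_pauliXZ) pauliY_mul_pauliXZ
  exact .of_isCliffordFamily (by simpa using hE) (by simp) (by simp)

theorem hasCliffordModule_one_five_eight : HasCliffordModule 1 5 8 3 := by
  have hE := isCliffordFamily_quaternionLeft.kronecker_sumElim isCliffordUnit_pauliY
    (by simpa using isCliffordFamily_pauliXZ) pauliY_mul_pauliXZ
  have hK := isCliffordFamily_quaternionRight.kronecker_right (κ' := Fin 2) .one
  rw [mul_one] at hK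
  refine .of_card (by simpa using hE) hK ?_ (by simp) (by simp) (by simp)
  rintro (i | i) j
  · exact commute_kronecker (commute_quaternionLeft_quaternionRight i j) (.one_right _)
  · exact commute_kronecker (.one_left _) (.one_right _)

theorem hasCliffordModule_one_one_four : HasCliffordModule 1 1 4 3 :=
  .of_card (.const .one) isCliffordFamily_quaternionRight (fun _ _ => .one_left _) (by simp)
    (by simp) (by simp)

theorem hasCliffordModule_neg_one_three_four : HasCliffordModule (-1) 3 4 3 :=
  .of_card isCliffordFamily_quaternionLeft isCliffordFamily_quaternionRight
    commute_quaternionLeft_quaternionRight (by simp) (by simp) (by simp)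

end SmallCliffordFamilies

/-! ### Linear algebra and Hilbert spaces -/

section LinearAlgebra

theorem sum_mul_mul_sum_mul_of_anticomm {A ι : Type*} [Ring A] [Fintype ι] {E P : ι → A}
    (hE : Pairwise fun i j => E i * E j = -(E j * E i)) (hP : ∀ i j, Commute (P i) (P j))
    (hEP : ∀ i j, Commute (E i) (P j)) :
    (∑ i, E i * P i) * ∑ i, E i * P i = ∑ i, E i * E i * (P i * P i) := by
  classical
  have hmul (i j : ι) : E i * P i * (E j * P j) = E i * E j * (P i * P j) := by
    rw [mul_assoc, ← mul_assoc (P i), ← (hEP j i).eq, mul_assoc, mul_assoc]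
  have hcross (i j : ι) (h : i ≠ j) : E i * P i * (E j * P j) + E j * P j * (E i * P i) = 0 := by
    rw [hmul, hmul, hE h, (hP i j).eq, neg_mul, neg_add_cancel]
  simp only [← hmul]
  induction (Finset.univ : Finset ι) using Finset.induction_on with
  | empty => simp
  | insert a s ha ih =>
    have hsum : E a * P a * ∑ i ∈ s, E i * P i + (∑ i ∈ s, E i * P i) * (E a * P a) = 0 := by
      rw [Finset.mul_sum, Finset.sum_mul, ← Finset.sum_add_distrib]
      exact Finset.sum_eq_zero fun i hi => hcross a i (ne_of_mem_of_not_mem hi ha).symm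
    rw [Finset.sum_insert ha, Finset.sum_insert ha, ← ih, add_mul, mul_add, mul_add,
      ← add_assoc, add_assoc (E a * P a * (E a * P a)), hsum, add_zero]

theorem sum_mul_anticommutator_of_anticomm {A ι : Type*} [Ring A] [Fintype ι] {a x e p : ι → A}
    (hae : ∀ i j, a i * e j = -(e j * a i)) (hex : ∀ i j, Commute (e i) (x j))
    (hap : ∀ i j, Commute (a i) (p j)) :
    (∑ i, a i * x i) * ∑ j, e j * p j + (∑ j, e j * p j) * ∑ i, a i * x i =
      ∑ i, ∑ j, a i * e j * (x i * p j - p j * x i) := by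
  rw [Finset.sum_mul_sum, Finset.sum_mul_sum,
    Finset.sum_comm (f := fun j i => e j * p j * (a i * x i)),
    ← Finset.sum_add_distrib]
  refine Finset.sum_congr rfl fun i _ => ?_
  rw [← Finset.sum_add_distrib]
  refine Finset.sum_congr rfl fun j _ => ?_
  rw [(hex j i).symm.mul_mul_mul_comm, (hap i j).symm.mul_mul_mul_comm, mul_sub,
    sub_eq_add_neg, ← neg_mul, ← neg_eq_iff_eq_neg.2 (hae i j)]

variable {K V : Type*} [Field K] [AddCommGroup V] [Module K V] [FiniteDimensional K V]

theorem two_mul_finrank_ker_of_mul_self_eq_zero {f g : Module.End K V} {r : K} (hr : r ≠ 0)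
    (hf : f * f = 0) (hfg : g * f + f * g = r • 1) :
    2 * Module.finrank K (LinearMap.ker f) = Module.finrank K V := by
  have hrange : LinearMap.range f = LinearMap.ker f := by
    refine le_antisymm (LinearMap.range_le_ker_iff.2 hf) fun x hx => ?_
    have hx' := LinearMap.congr_fun hfg x
    simp only [LinearMap.add_apply, Module.End.mul_apply, LinearMap.mem_ker.1 hx, map_zero,
      zero_add, LinearMap.smul_apply, Module.End.one_apply] at hx'
    exact ⟨r⁻¹ • g x, by rw [map_smul, hx', inv_smul_smul₀ hr]⟩
  rw [← f.finrank_range_add_finrank_ker, hrange, two_mul]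

theorem two_pow_mul_finrank_iInf_ker {ι : Type*} {f g : ι → Module.End K V} {r : K} (hr : r ≠ 0)
    (hsq : ∀ i, f i * f i = 0) (hf : Pairwise fun i j => f i * f j = -(f j * f i))
    (hgf : ∀ i, g i * f i + f i * g i = r • 1) (hne : Pairwise fun i j => f i * g j = -(g j * f i))
    (s : Finset ι) :
    2 ^ s.card * Module.finrank K (⨅ i ∈ s, LinearMap.ker (f i) : Submodule K V) =
      Module.finrank K V := by
  classical
  induction s using Finset.induction_on with
  | empty =>
    have htop : (⨅ i ∈ (∅ : Finset ι), LinearMap.ker (f i)) = ⊤ := by simp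
    rw [htop, finrank_top, Finset.card_empty, pow_zero, one_mul]
  | insert a s ha ih =>
    rw [Finset.card_insert_of_notMem ha, pow_succ, ← ih, mul_assoc, Finset.iInf_insert]
    set W : Submodule K V := ⨅ i ∈ s, LinearMap.ker (f i) with hW
    have hmem (x : V) : x ∈ W ↔ ∀ i ∈ s, f i x = 0 := by simp [hW]
    have hmaps {h : Module.End K V} (hh : ∀ i ∈ s, f i * h = -(h * f i)) : ∀ x ∈ W, h x ∈ W := by
      refine fun x hx => (hmem _).2 fun i hi => ?_
      rw [← Module.End.mul_apply, hh i hi, LinearMap.neg_apply, Module.End.mul_apply,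
        (hmem x).1 hx i hi, map_zero, neg_zero]
    have hfW : ∀ x ∈ W, f a x ∈ W := hmaps fun i hi => hf (ne_of_mem_of_not_mem hi ha)
    have hgW : ∀ x ∈ W, g a x ∈ W := hmaps fun i hi => hne (ne_of_mem_of_not_mem hi ha)
    have hhalf := two_mul_finrank_ker_of_mul_self_eq_zero (f := (f a).restrict hfW)
      (g := (g a).restrict hgW) hr
      (by ext x; simpa using LinearMap.congr_fun (hsq a) x.1)
      (by ext x; simpa using LinearMap.congr_fun (hgf a) x.1)
    rw [← hhalf, LinearMap.ker_restrict, inf_comm, ← Submodule.finrank_map_subtype_eq,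
      Submodule.map_comap_subtype]

theorem four_dvd_finrank_of_quaternion {V : Type*} [AddCommGroup V] [Module ℝ V]
    [Module.Finite ℝ V] {I J : Module.End ℝ V} (hI : I * I = -1) (hJ : J * J = -1)
    (hIJ : I * J = -(J * I)) : 4 ∣ Module.finrank ℝ V := by
  let basis : QuaternionAlgebra.Basis (Module.End ℝ V) (-1 : ℝ) 0 (-1) :=
    { i := I, j := J, k := I * J, i_mul_i := by simp [hI], j_mul_j := by simp [hJ],
      i_mul_j := rfl, j_mul_i := by simp [hIJ] }
  let φ : Quaternion ℝ →ₐ[ℝ] Module.End ℝ V := basis.liftHom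
  let _ : Module (Quaternion ℝ) V := Module.compHom V φ.toRingHom
  have : IsScalarTower ℝ (Quaternion ℝ) V :=
    ⟨fun r q v => congrArg (fun T : Module.End ℝ V => T v) (map_smul φ r q)⟩
  exact ⟨_, (Quaternion.finrank_eq_four (R := ℝ) ▸
    Module.finrank_mul_finrank ℝ (Quaternion ℝ) V).symm⟩

end LinearAlgebra

section HilbertSpace

theorem rank_orthogonal_range_le {𝕜 X H : Type*} [RCLike 𝕜] [AddCommGroup X] [Module 𝕜 X]
    [NormedAddCommGroup H] [InnerProductSpace 𝕜 H] [CompleteSpace H] {T T' : X →ₗ[𝕜] H} {θ : ℝ}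
    (hθ : θ < 1) (h : ∀ u, ‖T u - T' u‖ ≤ θ * ‖T u‖) :
    Module.rank 𝕜 (LinearMap.range T')ᗮ ≤ Module.rank 𝕜 (LinearMap.range T)ᗮ := by
  let proj : (LinearMap.range T')ᗮ →ₗ[𝕜] (LinearMap.range T)ᗮ :=
    (LinearMap.range T)ᗮ.orthogonalProjectionOnto.toLinearMap ∘ₗ Submodule.subtype _
  refine LinearMap.rank_le_of_injective proj ((injective_iff_map_eq_zero proj).2 ?_)
  rintro ⟨y, hy⟩ hproj
  have hy_closure : y ∈ (LinearMap.range T).topologicalClosure := by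
    rw [← Submodule.orthogonal_orthogonal_eq_closure]
    exact Submodule.orthogonalProjectionOnto_eq_zero_iff.1 hproj
  have hbound : ∀ z ∈ (LinearMap.range T : Set H), ‖(inner 𝕜 y z : 𝕜)‖ ≤ θ * (‖y‖ * ‖z‖) := by
    rintro _ ⟨u, rfl⟩
    calc ‖(inner 𝕜 y (T u) : 𝕜)‖ = ‖(inner 𝕜 y (T u - T' u) : 𝕜)‖ := by
          rw [inner_sub_right, (Submodule.mem_orthogonal' _ _).1 hy _ ⟨u, rfl⟩, sub_zero]
      _ ≤ ‖y‖ * ‖T u - T' u‖ := norm_inner_le_norm _ _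
      _ ≤ ‖y‖ * (θ * ‖T u‖) := by gcongr; exact h u
      _ = θ * (‖y‖ * ‖T u‖) := by ring
  have hclosed : IsClosed {z : H | ‖(inner 𝕜 y z : 𝕜)‖ ≤ θ * (‖y‖ * ‖z‖)} :=
    isClosed_le (by fun_prop) (by fun_prop)
  have hself : ‖(inner 𝕜 y y : 𝕜)‖ ≤ θ * (‖y‖ * ‖y‖) := closure_minimal hbound hclosed hy_closure
  rw [inner_self_eq_norm_sq_to_K, norm_pow, RCLike.norm_ofReal, sq_abs] at hself
  rw [Submodule.mk_eq_zero]
  by_contra hne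
  nlinarith [norm_pos_iff.2 hne, mul_pos (norm_pos_iff.2 hne) (norm_pos_iff.2 hne)]

theorem rank_orthogonal_range_eq_of_lipschitz {𝕜 𝒯 X H : Type*} [RCLike 𝕜] [PseudoMetricSpace 𝒯]
    [PreconnectedSpace 𝒯] [AddCommGroup X] [Module 𝕜 X] [NormedAddCommGroup H]
    [InnerProductSpace 𝕜 H] [CompleteSpace H] {T : 𝒯 → X →ₗ[𝕜] H} {p : X → ℝ} {c L : ℝ}
    (hc : 0 < c) (hL : 0 ≤ L) (hlower : ∀ t u, c * p u ≤ ‖T t u‖)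
    (hlip : ∀ t t' u, ‖T t u - T t' u‖ ≤ L * dist t t' * p u) (t t' : 𝒯) :
    Module.rank 𝕜 (LinearMap.range (T t))ᗮ = Module.rank 𝕜 (LinearMap.range (T t'))ᗮ := by
  have hclose (t t' : 𝒯) (htt' : L * dist t t' / c < 1) :
      Module.rank 𝕜 (LinearMap.range (T t'))ᗮ ≤ Module.rank 𝕜 (LinearMap.range (T t))ᗮ := by
    refine rank_orthogonal_range_le htt' fun u => (hlip t t' u).trans ?_
    rw [div_mul_eq_mul_div, le_div_iff₀ hc, mul_assoc, mul_comm (p u)]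
    exact mul_le_mul_of_nonneg_left (hlower t u) (by positivity)
  have hconst : IsLocallyConstant fun t => Module.rank 𝕜 (LinearMap.range (T t))ᗮ := by
    refine (IsLocallyConstant.iff_eventually_eq _).2 fun t => ?_
    have hlim : Filter.Tendsto (fun t' => L * dist t t' / c) (nhds t) (nhds 0) := by
      have hcont : Continuous fun t' => L * dist t t' / c := by fun_prop
      simpa using hcont.tendsto t
    filter_upwards [hlim.eventually (gt_mem_nhds one_pos)] with t' htt'
    exact (hclose t t' htt').antisymm (hclose t' t (by rwa [dist_comm]))
  exact hconst.apply_eq_of_preconnectedSpace t t'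

open Function in
theorem mul_sum_norm_sq_le_norm_sq_sum_of_commute {ι E : Type*} [Fintype ι]
    [NormedAddCommGroup E] [InnerProductSpace ℝ E] [FiniteDimensional ℝ E]
    {T A : ι → Module.End ℝ E} (hT : ∀ i, (T i).IsSymmetric) (hTT : Pairwise (Commute on T))
    (hAT : ∀ i j, Commute (A i) (T j)) {c : ℝ}
    (hA : ∀ (v : ι → ℝ) w, c * (∑ i, v i ^ 2) * ‖w‖ ^ 2 ≤ ‖∑ i, v i • A i w‖ ^ 2) (u : E) :
    c * ∑ i, ‖T i u‖ ^ 2 ≤ ‖∑ i, A i (T i u)‖ ^ 2 := by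
  classical
  let V (γ : ι → ℝ) : Submodule ℝ E := ⨅ i, Module.End.eigenspace (T i) (γ i)
  have hV : OrthogonalFamily ℝ (fun γ => V γ) fun γ => (V γ).subtypeₗᵢ :=
    LinearMap.IsSymmetric.orthogonalFamily_iInf_eigenspaces hT
  have hu : u ∈ ⨆ γ, V γ := by
    rw [LinearMap.IsSymmetric.iSup_iInf_eq_top_of_commute hT hTT]; trivial
  obtain ⟨w, rfl⟩ := (Submodule.mem_iSup_iff_exists_dfinsupp' _ _).1 hu
  rw [DFinsupp.sum]
  have hTw (i : ι) (γ : ι → ℝ) : T i (w γ) = γ i • (w γ : E) :=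
    Module.End.mem_eigenspace_iff.1 (Submodule.mem_iInf _ |>.1 (w γ).2 i)
  have hAV (v γ : ι → ℝ) : ∑ i, v i • A i (w γ) ∈ V γ := by
    refine sum_mem fun i _ => (V γ).smul_mem _ <| (Submodule.mem_iInf _).2 fun j => ?_
    rw [Module.End.mem_eigenspace_iff, ← Module.End.mul_apply, ← (hAT i j).eq,
      Module.End.mul_apply, hTw, map_smul]
  have hnorm (i : ι) : ‖T i (∑ γ ∈ w.support, (w γ : E))‖ ^ 2 =
      ∑ γ ∈ w.support, γ i ^ 2 * ‖w γ‖ ^ 2 := by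
    have hortho := hV.norm_sum (fun γ => γ i • w γ) w.support
    simpa [hTw, norm_smul, mul_pow] using hortho
  have hsum : ∑ i, A i (T i (∑ γ ∈ w.support, (w γ : E))) =
      ∑ γ ∈ w.support, ∑ i, γ i • A i (w γ) := by
    rw [Finset.sum_comm]
    simp only [map_sum, hTw, map_smul]
  calc c * ∑ i, ‖T i (∑ γ ∈ w.support, (w γ : E))‖ ^ 2
      = ∑ γ ∈ w.support, c * (∑ i, γ i ^ 2) * ‖w γ‖ ^ 2 := by
        simp only [hnorm, Finset.sum_comm (s := Finset.univ), Finset.mul_sum, Finset.sum_mul,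
          mul_assoc]
    _ ≤ ∑ γ ∈ w.support, ‖∑ i, γ i • A i (w γ)‖ ^ 2 := by gcongr; exact hA _ _
    _ = ‖∑ i, A i (T i (∑ γ ∈ w.support, (w γ : E)))‖ ^ 2 := by
        rw [hsum]
        exact (hV.norm_sum (fun γ => ⟨_, hAV γ γ⟩) w.support).symm

end HilbertSpace

/-! ### Operators on Hermite sequences -/

/-- Sequences of vectors of `κ → ℝ` indexed by multi-indices `a : ι → ℕ`, read as the coefficients
of a `κ → ℝ`-valued function on `ℝ^ι` in the Hermite basis. -/
abbrev HermiteSeq (ι κ : Type*) := (ι → ℕ) → κ → ℝ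

section CoeffAction

variable {ι κ : Type*} [Fintype κ] [DecidableEq κ]

/-- The action of a constant matrix on the coefficients. -/
noncomputable def coeffAction : Matrix κ κ ℝ →ₐ[ℝ] Module.End ℝ (HermiteSeq ι κ) :=
  AlgHom.ofLinearMap
    { toFun B := (Matrix.mulVecLin B).compLeft (ι → ℕ)
      map_add' _ _ := LinearMap.ext fun _ => funext fun _ => add_mulVec _ _ _
      map_smul' _ _ := LinearMap.ext fun _ => funext fun _ => smul_mulVec _ _ _ }
    (LinearMap.ext fun _ => funext fun _ => one_mulVec _)
    (fun _ _ => LinearMap.ext fun _ => funext fun _ => (mulVec_mulVec _ _ _).symm)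

theorem coeffAction_apply (B : Matrix κ κ ℝ) (u : HermiteSeq ι κ) (a : ι → ℕ) :
    coeffAction B u a = B *ᵥ u a := rfl

end CoeffAction

section Oscillator

variable {ι κ : Type*} [DecidableEq ι]

/-- The annihilation operator of the `i`-th harmonic oscillator. -/
noncomputable def lowering (i : ι) : Module.End ℝ (HermiteSeq ι κ) where
  toFun u a := √(a i + 1) • u (a + Pi.single i 1)
  map_add' _ _ := funext fun _ => smul_add _ _ _
  map_smul' r _ := funext fun _ => smul_comm _ r _

/-- The creation operator of the `i`-th harmonic oscillator. The subtraction of multi-indices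
truncates, but only where the factor `√(a i)` vanishes. -/
noncomputable def raising (i : ι) : Module.End ℝ (HermiteSeq ι κ) where
  toFun u a := √(a i) • u (a - Pi.single i 1)
  map_add' _ _ := funext fun _ => smul_add _ _ _
  map_smul' r _ := funext fun _ => smul_comm _ r _

theorem lowering_apply (i : ι) (u : HermiteSeq ι κ) (a : ι → ℕ) :
    lowering i u a = √(a i + 1) • u (a + Pi.single i 1) := rfl

theorem raising_apply (i : ι) (u : HermiteSeq ι κ) (a : ι → ℕ) :
    raising i u a = √(a i) • u (a - Pi.single i 1) := rfl

theorem commute_lowering (i j : ι) : Commute (lowering i : Module.End ℝ (HermiteSeq ι κ))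
    (lowering j) := by
  rcases eq_or_ne i j with rfl | h
  · exact Commute.refl _
  refine LinearMap.ext fun u => funext fun a => ?_
  simp only [Module.End.mul_apply, lowering_apply, Pi.add_apply, Pi.single_eq_of_ne h,
    Pi.single_eq_of_ne h.symm, add_zero, smul_smul, mul_comm, add_right_comm]

theorem commute_raising (i j : ι) : Commute (raising i : Module.End ℝ (HermiteSeq ι κ))
    (raising j) := by
  rcases eq_or_ne i j with rfl | h
  · exact Commute.refl _
  refine LinearMap.ext fun u => funext fun a => ?_
  simp only [Module.End.mul_apply, raising_apply, Pi.sub_apply, Pi.single_eq_of_ne h,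
    Pi.single_eq_of_ne h.symm, tsub_zero, smul_smul, mul_comm, tsub_right_comm]

theorem single_one_le {a : ι → ℕ} {i : ι} (h : a i ≠ 0) : Pi.single i 1 ≤ a := by
  intro j
  rcases eq_or_ne j i with rfl | hj
  · simpa using Nat.one_le_iff_ne_zero.2 h
  · simp [hj]

theorem raising_lowering_apply (i : ι) (u : HermiteSeq ι κ) (a : ι → ℕ) :
    raising i (lowering i u) a = (a i : ℝ) • u a := by
  rw [raising_apply, lowering_apply, smul_smul]
  rcases Nat.eq_zero_or_pos (a i) with h | h
  · simp [h]
  rw [tsub_add_cancel_of_le (single_one_le h.ne'), Pi.sub_apply, Pi.single_eq_same,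
    Nat.cast_sub h, Nat.cast_one,
    sub_add_cancel, Real.mul_self_sqrt (Nat.cast_nonneg _)]

theorem lowering_mul_raising_self (i : ι) :
    (lowering i * raising i : Module.End ℝ (HermiteSeq ι κ)) = raising i * lowering i + 1 := by
  refine LinearMap.ext fun u => funext fun a => ?_
  rw [LinearMap.add_apply, Pi.add_apply, Module.End.mul_apply, Module.End.mul_apply,
    raising_lowering_apply, lowering_apply, raising_apply, smul_smul, add_tsub_cancel_right,
    Pi.add_apply,
    Pi.single_eq_same, Nat.cast_add, Nat.cast_one, Real.mul_self_sqrt (by positivity), add_smul,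
    one_smul, Module.End.one_apply]

theorem commute_lowering_raising_of_ne {i j : ι} (h : i ≠ j) :
    Commute (lowering i : Module.End ℝ (HermiteSeq ι κ)) (raising j) := by
  refine LinearMap.ext fun u => funext fun a => ?_
  have hshift : a + Pi.single i 1 - Pi.single j 1 = a - Pi.single j 1 + Pi.single i 1 := by
    funext k
    rcases eq_or_ne k j with rfl | hk
    · simp [h.symm]
    · simp [hk]
  simp only [Module.End.mul_apply, lowering_apply, raising_apply, Pi.add_apply, Pi.sub_apply,
    Pi.single_eq_of_ne h, Pi.single_eq_of_ne h.symm, add_zero, tsub_zero, smul_smul, mul_comm,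
    hshift]

/-- The multiplication by the `i`-th coordinate, normalised so that the oscillator has
Hamiltonian `position ^ 2 - momentum ^ 2 = 4 a + 2`. -/
noncomputable def position (i : ι) : Module.End ℝ (HermiteSeq ι κ) := lowering i + raising i

/-- The differentiation along the `i`-th coordinate, a skew-adjoint operator. -/
noncomputable def momentum (i : ι) : Module.End ℝ (HermiteSeq ι κ) := lowering i - raising i

theorem commute_position (i j : ι) : Commute (position i : Module.End ℝ (HermiteSeq ι κ))
    (position j) := by
  rcases eq_or_ne i j with rfl | h
  · exact Commute.refl _
  · exact ((commute_lowering i j).add_right (commute_lowering_raising_of_ne h)).add_left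
      (Commute.add_right (commute_lowering_raising_of_ne h.symm).symm (commute_raising i j))

theorem commute_momentum (i j : ι) : Commute (momentum i : Module.End ℝ (HermiteSeq ι κ))
    (momentum j) := by
  rcases eq_or_ne i j with rfl | h
  · exact Commute.refl _
  · exact ((commute_lowering i j).sub_right (commute_lowering_raising_of_ne h)).sub_left
      (Commute.sub_right (commute_lowering_raising_of_ne h.symm).symm (commute_raising i j))

theorem commute_position_momentum_of_ne {i j : ι} (h : i ≠ j) :
    Commute (position i : Module.End ℝ (HermiteSeq ι κ)) (momentum j) :=
  ((commute_lowering i j).sub_right (commute_lowering_raising_of_ne h)).add_left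
    (Commute.sub_right (commute_lowering_raising_of_ne h.symm).symm (commute_raising i j))

theorem position_mul_momentum_sub_self (i : ι) :
    (position i * momentum i - momentum i * position i : Module.End ℝ (HermiteSeq ι κ)) =
      (-2 : ℝ) • 1 := by
  simp only [position, momentum, add_mul, mul_add, sub_mul, mul_sub, lowering_mul_raising_self]
  module

theorem position_mul_self_sub_momentum_mul_self (i : ι) :
    (position i * position i - momentum i * momentum i : Module.End ℝ (HermiteSeq ι κ)) =
      (4 : ℝ) • (raising i * lowering i) + (2 : ℝ) • 1 := by
  simp only [position, momentum, add_mul, mul_add, sub_mul, mul_sub, lowering_mul_raising_self]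
  module

theorem raising_apply_eq_zero {i : ι} {u : HermiteSeq ι κ} {a : ι → ℕ}
    (hsub : a i ≠ 0 → u (a - Pi.single i 1) = 0) : raising i u a = 0 := by
  rcases eq_or_ne (a i) 0 with h | h
  · simp [raising_apply, h]
  · rw [raising_apply, hsub h, smul_zero]

theorem position_apply_eq_zero {i : ι} {u : HermiteSeq ι κ} {a : ι → ℕ}
    (hadd : u (a + Pi.single i 1) = 0) (hsub : a i ≠ 0 → u (a - Pi.single i 1) = 0) :
    position i u a = 0 := by
  rw [position, LinearMap.add_apply, Pi.add_apply, raising_apply_eq_zero hsub, lowering_apply, hadd,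
    smul_zero, add_zero]

theorem momentum_apply_eq_zero {i : ι} {u : HermiteSeq ι κ} {a : ι → ℕ}
    (hadd : u (a + Pi.single i 1) = 0) (hsub : a i ≠ 0 → u (a - Pi.single i 1) = 0) :
    momentum i u a = 0 := by
  rw [momentum, LinearMap.sub_apply, Pi.sub_apply, raising_apply_eq_zero hsub, lowering_apply, hadd,
    smul_zero, sub_zero]

variable [Fintype κ] [DecidableEq κ]

theorem commute_coeffAction_lowering (B : Matrix κ κ ℝ) (i : ι) :
    Commute (coeffAction B) (lowering i) := by
  refine LinearMap.ext fun u => funext fun a => ?_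
  simp only [Module.End.mul_apply, coeffAction_apply, lowering_apply, mulVec_smul]

theorem commute_coeffAction_raising (B : Matrix κ κ ℝ) (i : ι) :
    Commute (coeffAction B) (raising i) := by
  refine LinearMap.ext fun u => funext fun a => ?_
  simp only [Module.End.mul_apply, coeffAction_apply, raising_apply, mulVec_smul]

theorem commute_coeffAction_position (B : Matrix κ κ ℝ) (i : ι) :
    Commute (coeffAction B) (position i) :=
  (commute_coeffAction_lowering B i).add_right (commute_coeffAction_raising B i)

theorem commute_coeffAction_momentum (B : Matrix κ κ ℝ) (i : ι) :
    Commute (coeffAction B) (momentum i) :=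
  (commute_coeffAction_lowering B i).sub_right (commute_coeffAction_raising B i)

end Oscillator

section Pairing

variable {ι κ : Type*}

/-- The finitely supported Hermite sequences. -/
def finiteSeq (ι κ : Type*) : Submodule ℝ (HermiteSeq ι κ) where
  carrier := {u | (Function.support u).Finite}
  add_mem' hu hv := (hu.union hv).subset (Function.support_add _ _)
  zero_mem' := by simp
  smul_mem' r u hu := hu.subset (Function.support_const_smul_subset r u)

theorem single_mem_finiteSeq [DecidableEq (ι → ℕ)] (a : ι → ℕ) (w : κ → ℝ) :
    (Pi.single a w : HermiteSeq ι κ) ∈ finiteSeq ι κ :=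
  (Set.finite_singleton a).subset Pi.support_single_subset

variable [Fintype κ]

/-- The `ℓ²` pairing of Hermite sequences. The series converges when one of them is finitely
supported; a divergent series counts as `0`. -/
noncomputable def pairing (y v : HermiteSeq ι κ) : ℝ := ∑' a, y a ⬝ᵥ v a

variable {u v w y z : HermiteSeq ι κ}

theorem summable_dotProduct (hv : v ∈ finiteSeq ι κ) : Summable fun a => y a ⬝ᵥ v a :=
  summable_of_hasFiniteSupport <| hv.subset fun a ha h0 => ha (by simp [h0])

theorem pairing_comm (y v : HermiteSeq ι κ) : pairing y v = pairing v y :=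
  tsum_congr fun _ => dotProduct_comm _ _

theorem pairing_add_left (hv : v ∈ finiteSeq ι κ) :
    pairing (y + z) v = pairing y v + pairing z v := by
  rw [pairing, pairing, pairing, ← (summable_dotProduct hv).tsum_add (summable_dotProduct hv)]
  exact tsum_congr fun _ => add_dotProduct _ _ _

theorem pairing_smul_left (r : ℝ) : pairing (r • y) v = r * pairing y v := by
  rw [pairing, pairing, ← tsum_mul_left]
  exact tsum_congr fun _ => by rw [Pi.smul_apply, smul_dotProduct, smul_eq_mul]

theorem pairing_sub_left (hv : v ∈ finiteSeq ι κ) :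
    pairing (y - z) v = pairing y v - pairing z v := by
  rw [sub_eq_add_neg, ← neg_one_smul ℝ z, pairing_add_left hv, pairing_smul_left, neg_one_mul,
    sub_eq_add_neg]

theorem pairing_add_right (hv : v ∈ finiteSeq ι κ) (hw : w ∈ finiteSeq ι κ) :
    pairing y (v + w) = pairing y v + pairing y w := by
  rw [pairing, pairing, pairing, ← (summable_dotProduct hv).tsum_add (summable_dotProduct hw)]
  exact tsum_congr fun _ => dotProduct_add _ _ _

theorem pairing_smul_right (r : ℝ) : pairing y (r • v) = r * pairing y v := by
  rw [pairing_comm, pairing_smul_left, pairing_comm]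

theorem pairing_self_nonneg (v : HermiteSeq ι κ) : 0 ≤ pairing v v :=
  tsum_nonneg fun a => Finset.sum_nonneg fun k _ => mul_self_nonneg (v a k)

theorem pairing_single [DecidableEq (ι → ℕ)] (y : HermiteSeq ι κ) (a : ι → ℕ) (w : κ → ℝ) :
    pairing y (Pi.single a w) = y a ⬝ᵥ w := by
  rw [pairing, tsum_eq_single a fun b hb => by simp [hb], Pi.single_eq_same]

/-- `g` is the formal adjoint of the operator `f`, which preserves finitely supported
sequences. -/
structure IsFormalAdjoint (f g : Module.End ℝ (HermiteSeq ι κ)) : Prop where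
  map_mem : ∀ v ∈ finiteSeq ι κ, f v ∈ finiteSeq ι κ
  pairing_eq : ∀ y, ∀ v ∈ finiteSeq ι κ, pairing y (f v) = pairing (g y) v

namespace IsFormalAdjoint

variable {f f' g g' : Module.End ℝ (HermiteSeq ι κ)}

theorem add (h : IsFormalAdjoint f g) (h' : IsFormalAdjoint f' g') :
    IsFormalAdjoint (f + f') (g + g') where
  map_mem v hv := add_mem (h.map_mem v hv) (h'.map_mem v hv)
  pairing_eq y v hv := by
    rw [LinearMap.add_apply, LinearMap.add_apply,
      pairing_add_right (h.map_mem v hv) (h'.map_mem v hv), h.pairing_eq y v hv,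
      h'.pairing_eq y v hv, pairing_add_left hv]

theorem smul (h : IsFormalAdjoint f g) (r : ℝ) : IsFormalAdjoint (r • f) (r • g) where
  map_mem v hv := Submodule.smul_mem _ r (h.map_mem v hv)
  pairing_eq y v hv := by
    rw [LinearMap.smul_apply, LinearMap.smul_apply, pairing_smul_right, pairing_smul_left,
      h.pairing_eq y v hv]

theorem sub (h : IsFormalAdjoint f g) (h' : IsFormalAdjoint f' g') :
    IsFormalAdjoint (f - f') (g - g') := by
  rw [sub_eq_add_neg, sub_eq_add_neg, ← neg_one_smul ℝ f', ← neg_one_smul ℝ g']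
  exact h.add (h'.smul (-1))

theorem sum {α : Type*} (s : Finset α) {f g : α → Module.End ℝ (HermiteSeq ι κ)}
    (h : ∀ i, IsFormalAdjoint (f i) (g i)) : IsFormalAdjoint (∑ i ∈ s, f i) (∑ i ∈ s, g i) := by
  classical
  induction s using Finset.induction_on with
  | empty => exact ⟨fun _ _ => zero_mem _, fun _ _ _ => by simp [pairing]⟩
  | insert a s ha ih =>
    rw [Finset.sum_insert ha, Finset.sum_insert ha]
    exact (h a).add ih

theorem mul (h : IsFormalAdjoint f g) (h' : IsFormalAdjoint f' g') :
    IsFormalAdjoint (f * f') (g' * g) where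
  map_mem v hv := h.map_mem _ (h'.map_mem v hv)
  pairing_eq y v hv := by
    rw [Module.End.mul_apply, h.pairing_eq _ _ (h'.map_mem v hv), h'.pairing_eq _ _ hv,
      Module.End.mul_apply]

end IsFormalAdjoint

theorem isFormalAdjoint_coeffAction [DecidableEq κ] (B : Matrix κ κ ℝ) :
    IsFormalAdjoint (ι := ι) (coeffAction B) (coeffAction Bᵀ) where
  map_mem v hv := hv.subset fun a ha h0 => ha (by rw [coeffAction_apply, h0, mulVec_zero])
  pairing_eq y v _ := tsum_congr fun a => by
    rw [coeffAction_apply, coeffAction_apply, dotProduct_mulVec, mulVec_transpose]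

variable [DecidableEq ι]

theorem pairing_lowering (i : ι) (y v : HermiteSeq ι κ) :
    pairing y (lowering i v) = pairing (raising i y) v := by
  have hsupp : Function.support (fun a => raising i y a ⬝ᵥ v a) ⊆
      Set.range (· + (Pi.single i 1 : ι → ℕ)) := by
    intro a ha
    have hai : a i ≠ 0 := fun h0 => ha (by simp [raising_apply, h0])
    exact ⟨a - Pi.single i 1, tsub_add_cancel_of_le (single_one_le hai)⟩
  rw [pairing, pairing, ← (add_left_injective _).tsum_eq hsupp]
  refine tsum_congr fun a => ?_
  rw [lowering_apply, raising_apply, add_tsub_cancel_right, dotProduct_smul, smul_dotProduct,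
    Pi.add_apply, Pi.single_eq_same, Nat.cast_add, Nat.cast_one]

theorem isFormalAdjoint_lowering (i : ι) : IsFormalAdjoint (κ := κ) (lowering i) (raising i) where
  map_mem v hv := by
    refine (Set.Finite.preimage (add_left_injective (Pi.single i 1)).injOn hv).subset
      fun a ha h0 => ha ?_
    rw [lowering_apply, h0, smul_zero]
  pairing_eq y v _ := pairing_lowering i y v

theorem isFormalAdjoint_raising (i : ι) : IsFormalAdjoint (κ := κ) (raising i) (lowering i) where
  map_mem v hv := by
    refine (Set.Finite.image (· + Pi.single i 1) hv).subset fun a ha => ?_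
    rw [Function.mem_support, raising_apply, smul_ne_zero_iff] at ha
    have hai : a i ≠ 0 := fun h0 => ha.1 (by simp [h0])
    exact ⟨a - Pi.single i 1, ha.2, tsub_add_cancel_of_le (single_one_le hai)⟩
  pairing_eq y v _ := by rw [pairing_comm, ← pairing_lowering, pairing_comm]

theorem isFormalAdjoint_position (i : ι) : IsFormalAdjoint (κ := κ) (position i) (position i) := by
  conv => arg 2; rw [position, add_comm]
  exact (isFormalAdjoint_lowering i).add (isFormalAdjoint_raising i)

theorem isFormalAdjoint_momentum (i : ι) :
    IsFormalAdjoint (κ := κ) (momentum i) ((-1 : ℝ) • momentum i) := by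
  have hneg : (-1 : ℝ) • momentum i = (raising i - lowering i : Module.End ℝ (HermiteSeq ι κ)) := by
    rw [momentum]
    module
  rw [hneg]
  exact (isFormalAdjoint_lowering i).sub (isFormalAdjoint_raising i)

end Pairing

section Ellipticity

variable {ι κ : Type*} [Fintype ι] [Fintype κ]

/-- The pencil `v ↦ ∑ v i • α i` is elliptic with constant `c`: it satisfies
`c ‖v‖² ‖w‖² ≤ ‖(∑ v i • α i) w‖²`. -/
def IsEllipticPencil (c : ℝ) (α : ι → Matrix κ κ ℝ) : Prop :=
  ∀ (v : ι → ℝ) (w : κ → ℝ), c * (∑ i, v i ^ 2) * (w ⬝ᵥ w) ≤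
    ((∑ i, v i • α i) *ᵥ w) ⬝ᵥ ((∑ i, v i • α i) *ᵥ w)

theorem IsEllipticPencil.mul_pairing_le [DecidableEq κ] {c : ℝ} {α : ι → Matrix κ κ ℝ}
    (h : IsEllipticPencil c α) (v : ι → ℝ)
    {u : HermiteSeq ι κ} (hu : u ∈ finiteSeq ι κ) :
    c * (∑ i, v i ^ 2) * pairing u u ≤
      pairing (coeffAction (∑ i, v i • α i) u) (coeffAction (∑ i, v i • α i) u) := by
  rw [pairing, pairing, ← tsum_mul_left]
  exact (summable_dotProduct hu).mul_left _ |>.tsum_le_tsum (fun a => h v (u a))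
    (summable_dotProduct ((isFormalAdjoint_coeffAction _).map_mem u hu))

end Ellipticity

section QuadraticEstimate

variable {ι κ : Type*}

/-- The truncation of a Hermite sequence to the box `[0, K) ^ ι`. -/
noncomputable def boxRestrict (K : ℕ) :
    HermiteSeq ι κ →ₗ[ℝ] EuclideanSpace ℝ ((ι → Fin K) × κ) where
  toFun y := WithLp.toLp 2 fun p => y (fun i => p.1 i) p.2
  map_add' _ _ := rfl
  map_smul' _ _ := rfl

open Classical in
/-- The extension by zero of a family of coefficients on the box `[0, K) ^ ι`. -/
noncomputable def boxExtend (K : ℕ) :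
    EuclideanSpace ℝ ((ι → Fin K) × κ) →ₗ[ℝ] HermiteSeq ι κ where
  toFun u a k := if h : ∀ i, a i < K then u (fun i => ⟨a i, h i⟩, k) else 0
  map_add' u v := by ext a k; simp only [Pi.add_apply, PiLp.add_apply]; split_ifs <;> simp
  map_smul' r u := by
    ext a k
    simp only [RingHom.id_apply, Pi.smul_apply, PiLp.smul_apply]; split_ifs <;> simp

theorem boxRestrict_apply (K : ℕ) (y : HermiteSeq ι κ) (p : (ι → Fin K) × κ) :
    boxRestrict K y p = y (fun i => p.1 i) p.2 := rfl

theorem boxExtend_apply_coe {K : ℕ} (u : EuclideanSpace ℝ ((ι → Fin K) × κ)) (b : ι → Fin K)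
    (k : κ) : boxExtend K u (fun i => b i) k = u (b, k) :=
  dif_pos fun i => (b i).isLt

theorem boxExtend_apply_of_le {K : ℕ} (u : EuclideanSpace ℝ ((ι → Fin K) × κ)) {a : ι → ℕ} {i : ι}
    (hi : K ≤ a i) : boxExtend K u a = 0 :=
  funext fun _ => dif_neg fun h => (h i).not_ge hi

theorem boxRestrict_boxExtend {K : ℕ} (u : EuclideanSpace ℝ ((ι → Fin K) × κ)) :
    boxRestrict K (boxExtend K u) = u :=
  PiLp.ext fun p => boxExtend_apply_coe u p.1 p.2

theorem boxExtend_boxRestrict_apply {K : ℕ} (y : HermiteSeq ι κ) {a : ι → ℕ} (ha : ∀ i, a i < K) :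
    boxExtend K (boxRestrict K y) a = y a :=
  funext fun _ => dif_pos ha

theorem boxExtend_boxRestrict {K : ℕ} {y : HermiteSeq ι κ} (hy : ∀ a i, K ≤ a i → y a = 0) :
    boxExtend K (boxRestrict K y) = y := by
  funext a
  by_cases ha : ∀ i, a i < K
  · exact boxExtend_boxRestrict_apply y ha
  · obtain ⟨i, hi⟩ := not_forall.1 ha
    rw [boxExtend_apply_of_le _ (not_lt.1 hi), hy a i (not_lt.1 hi)]

theorem exists_forall_le_apply_eq_zero [Finite ι] {u : HermiteSeq ι κ} (hu : u ∈ finiteSeq ι κ) :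
    ∃ K, ∀ a i, K ≤ a i → u a = 0 := by
  have := Fintype.ofFinite ι
  obtain ⟨b, hb⟩ := hu.bddAbove
  refine ⟨(∑ i, b i) + 1, fun a i hai => by_contra fun ha => ?_⟩
  have hab : a i ≤ ∑ i, b i := (hb ha i).trans (Finset.single_le_sum_of_canonicallyOrdered
    (Finset.mem_univ i))
  omega

theorem boxExtend_mem_finiteSeq [Finite ι] {K : ℕ} (u : EuclideanSpace ℝ ((ι → Fin K) × κ)) :
    boxExtend K u ∈ finiteSeq ι κ := by
  have := Fintype.ofFinite ι
  classical
  refine (Set.finite_Iic fun _ : ι => K).subset fun a ha i => not_lt.1 fun hi => ha ?_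
  exact boxExtend_apply_of_le u (Nat.le_of_lt hi)

section BoxCoeffAction

variable [Fintype κ] [DecidableEq κ]

/-- The action of a constant matrix on families of coefficients on the box `[0, K) ^ ι`. -/
noncomputable def boxCoeffAction (K : ℕ) (B : Matrix κ κ ℝ) :
    Module.End ℝ (EuclideanSpace ℝ ((ι → Fin K) × κ)) :=
  boxRestrict K ∘ₗ coeffAction B ∘ₗ boxExtend K

theorem boxCoeffAction_apply {K : ℕ} (B : Matrix κ κ ℝ) (u : EuclideanSpace ℝ ((ι → Fin K) × κ)) :
    boxCoeffAction K B u = boxRestrict K (coeffAction B (boxExtend K u)) := rfl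

theorem coeffAction_boxExtend_apply_of_le {K : ℕ} (B : Matrix κ κ ℝ)
    (u : EuclideanSpace ℝ ((ι → Fin K) × κ)) (a : ι → ℕ) (i : ι) (hi : K ≤ a i) :
    coeffAction B (boxExtend K u) a = 0 := by
  rw [coeffAction_apply, boxExtend_apply_of_le u hi, mulVec_zero]

theorem boxExtend_boxCoeffAction {K : ℕ} (B : Matrix κ κ ℝ)
    (u : EuclideanSpace ℝ ((ι → Fin K) × κ)) :
    boxExtend K (boxCoeffAction K B u) = coeffAction B (boxExtend K u) :=
  boxExtend_boxRestrict (coeffAction_boxExtend_apply_of_le B u)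

theorem boxCoeffAction_boxRestrict {K : ℕ} (B : Matrix κ κ ℝ) (y : HermiteSeq ι κ) :
    boxCoeffAction K B (boxRestrict K y) = boxRestrict K (coeffAction B y) := by
  ext p
  rw [boxCoeffAction_apply, boxRestrict_apply, boxRestrict_apply, coeffAction_apply,
    coeffAction_apply, boxExtend_boxRestrict_apply y fun i => (p.1 i).isLt]

end BoxCoeffAction

variable [DecidableEq ι]

/-- The compression of the position operator to the box `[0, K) ^ ι`. -/
noncomputable def boxPosition (K : ℕ) (i : ι) :
    Module.End ℝ (EuclideanSpace ℝ ((ι → Fin K) × κ)) :=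
  boxRestrict K ∘ₗ position i ∘ₗ boxExtend K

theorem boxPosition_apply {K : ℕ} (i : ι) (u : EuclideanSpace ℝ ((ι → Fin K) × κ)) :
    boxPosition K i u = boxRestrict K (position i (boxExtend K u)) := rfl

theorem position_apply_eq_zero_of_lt {K : ℕ} {u : HermiteSeq ι κ}
    (hu : ∀ a j, K ≤ a j → u a = 0) {i : ι} (a : ι → ℕ) (j : ι) (hj : K < a j) :
    position i u a = 0 := by
  refine position_apply_eq_zero (hu _ j (le_trans hj.le (Nat.le_add_right _ _))) fun _ => hu _ j ?_
  have hsingle : (Pi.single i 1 : ι → ℕ) j ≤ 1 := by rw [Pi.single_apply]; split_ifs <;> simp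
  rw [Pi.sub_apply]
  omega

theorem boxRestrict_position_boxExtend_boxRestrict {K : ℕ} {i : ι} {y : HermiteSeq ι κ}
    (hy : ∀ a, K ≤ a i → y a = 0) :
    boxRestrict K (position i (boxExtend K (boxRestrict K y))) = boxRestrict K (position i y) := by
  have hzero (a : ι → ℕ) (ha : ∀ j ≠ i, a j < K) :
      (boxExtend K (boxRestrict K y) - y) a = 0 := by
    rw [Pi.sub_apply, sub_eq_zero]
    by_cases hai : a i < K
    · refine boxExtend_boxRestrict_apply y fun j => ?_
      rcases eq_or_ne j i with rfl | hj
      exacts [hai, ha j hj]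
    · rw [boxExtend_apply_of_le _ (not_lt.1 hai), hy a (not_lt.1 hai)]
  rw [← sub_eq_zero, ← map_sub, ← map_sub]
  ext p
  refine congrFun (position_apply_eq_zero (hzero _ fun j hj => ?_) fun _ => hzero _ fun j hj => ?_)
    p.2
  all_goals simp [hj]

theorem commute_boxPosition {i j : ι} (hij : i ≠ j) (K : ℕ) :
    Commute (boxPosition K i : Module.End ℝ (EuclideanSpace ℝ ((ι → Fin K) × κ)))
      (boxPosition K j) := by
  have hmul {i j : ι} (hij : i ≠ j) (u : EuclideanSpace ℝ ((ι → Fin K) × κ)) :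
      boxPosition K i (boxPosition K j u) =
        boxRestrict K (position i (position j (boxExtend K u))) := by
    refine boxRestrict_position_boxExtend_boxRestrict fun a ha =>
      position_apply_eq_zero ?_ fun _ => ?_
    all_goals exact boxExtend_apply_of_le u (i := i) (by simpa [hij] using ha)
  refine LinearMap.ext fun u => ?_
  rw [Module.End.mul_apply, Module.End.mul_apply, hmul hij, hmul hij.symm, ← Module.End.mul_apply,
    (commute_position i j).eq, Module.End.mul_apply]

theorem commute_boxCoeffAction_boxPosition [Fintype κ] [DecidableEq κ] (K : ℕ)
    (B : Matrix κ κ ℝ) (i : ι) :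
    Commute (boxCoeffAction K B) (boxPosition K i) := by
  refine LinearMap.ext fun u => ?_
  rw [Module.End.mul_apply, Module.End.mul_apply, boxPosition_apply, boxPosition_apply,
    boxCoeffAction_boxRestrict, boxExtend_boxCoeffAction, ← Module.End.mul_apply,
    (commute_coeffAction_position B i).eq, Module.End.mul_apply]

variable [Fintype ι] [Fintype κ]

theorem inner_boxRestrict {K : ℕ} (y : HermiteSeq ι κ)
    (u : EuclideanSpace ℝ ((ι → Fin K) × κ)) :
    inner ℝ (boxRestrict K y) u = pairing y (boxExtend K u) := by
  have hinj : Function.Injective fun (b : ι → Fin K) i => (b i : ℕ) :=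
    fun b b' h => funext fun i => Fin.ext (congrFun h i)
  have hsupp : Function.support (fun a => y a ⬝ᵥ boxExtend K u a) ⊆
      Set.range fun (b : ι → Fin K) i => (b i : ℕ) := by
    intro a ha
    by_contra hrange
    obtain ⟨i, hi⟩ := not_forall.1 fun h : ∀ i, a i < K => hrange ⟨fun i => ⟨a i, h i⟩, rfl⟩
    exact ha (by simp only [boxExtend_apply_of_le u (not_lt.1 hi), dotProduct_zero])
  rw [pairing, ← hinj.tsum_eq hsupp, tsum_fintype, PiLp.inner_apply, Fintype.sum_prod_type]
  refine Finset.sum_congr rfl fun b _ => Finset.sum_congr rfl fun k _ => ?_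
  rw [boxExtend_apply_coe, boxRestrict_apply]
  exact mul_comm _ _

theorem norm_sq_boxRestrict {K : ℕ} {y : HermiteSeq ι κ} (hy : ∀ a i, K ≤ a i → y a = 0) :
    ‖boxRestrict K y‖ ^ 2 = pairing y y := by
  rw [← real_inner_self_eq_norm_sq, inner_boxRestrict, boxExtend_boxRestrict hy]

theorem boxPosition_isSymmetric (K : ℕ) (i : ι) :
    (boxPosition K i : Module.End ℝ (EuclideanSpace ℝ ((ι → Fin K) × κ))).IsSymmetric := by
  intro u v
  rw [boxPosition_apply, boxPosition_apply, inner_boxRestrict, real_inner_comm, inner_boxRestrict,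
    pairing_comm _ (boxExtend K u),
    (isFormalAdjoint_position i).pairing_eq _ _ (boxExtend_mem_finiteSeq v)]

variable [DecidableEq κ]

/-- The multiplication by the matrix-valued function `x ↦ ∑ x i • α i`. -/
noncomputable def potential (α : ι → Matrix κ κ ℝ) : Module.End ℝ (HermiteSeq ι κ) :=
  ∑ i, coeffAction (α i) * position i

theorem potential_apply (α : ι → Matrix κ κ ℝ) (u : HermiteSeq ι κ) :
    potential α u = ∑ i, coeffAction (α i) (position i u) := by
  simp only [potential, LinearMap.sum_apply, Module.End.mul_apply]

/- The position operators cannot be diagonalised on finitely supported sequences, but their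
compressions to a box can, jointly, since they still commute. -/
theorem IsEllipticPencil.mul_sum_norm_sq_boxPosition_le {c : ℝ} {α : ι → Matrix κ κ ℝ}
    (h : IsEllipticPencil c α) {K : ℕ} (u : EuclideanSpace ℝ ((ι → Fin K) × κ)) :
    c * ∑ i, ‖boxPosition K i u‖ ^ 2 ≤ ‖∑ i, boxCoeffAction K (α i) (boxPosition K i u)‖ ^ 2 := by
  refine mul_sum_norm_sq_le_norm_sq_sum_of_commute (boxPosition_isSymmetric K)
    (fun i j hij => commute_boxPosition hij K)
    (fun i j => commute_boxCoeffAction_boxPosition K (α i) j) (fun v w => ?_) u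
  have hsum : ∑ i, v i • boxCoeffAction K (α i) w =
      boxRestrict K (coeffAction (∑ i, v i • α i) (boxExtend K w)) := by
    simp only [boxCoeffAction_apply, map_sum, map_smul, LinearMap.sum_apply, LinearMap.smul_apply]
  have hw : ‖w‖ ^ 2 = pairing (boxExtend K w) (boxExtend K w) := by
    rw [← inner_boxRestrict, boxRestrict_boxExtend, real_inner_self_eq_norm_sq]
  rw [hsum, norm_sq_boxRestrict (coeffAction_boxExtend_apply_of_le _ w), hw]
  exact h.mul_pairing_le v (boxExtend_mem_finiteSeq w)

theorem IsEllipticPencil.mul_sum_pairing_position_le {c : ℝ} {α : ι → Matrix κ κ ℝ}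
    (h : IsEllipticPencil c α)
    {u : HermiteSeq ι κ} (hu : u ∈ finiteSeq ι κ) :
    c * ∑ i, pairing (position i u) (position i u) ≤ pairing (potential α u) (potential α u) := by
  obtain ⟨K, hK⟩ := exists_forall_le_apply_eq_zero hu
  have hu_box : boxExtend (K + 1) (boxRestrict (K + 1) u) = u :=
    boxExtend_boxRestrict fun a i hi => hK a i (Nat.le_of_succ_le hi)
  have hposition (i : ι) := position_apply_eq_zero_of_lt hK (i := i)
  have hpotential (a : ι → ℕ) (j : ι) (hj : K + 1 ≤ a j) : potential α u a = 0 := by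
    rw [potential_apply, Finset.sum_apply]
    exact Finset.sum_eq_zero fun i _ => by rw [coeffAction_apply, hposition i a j hj, mulVec_zero]
  have hbox := h.mul_sum_norm_sq_boxPosition_le (boxRestrict (K + 1) u)
  simp only [boxPosition_apply, hu_box, boxCoeffAction_boxRestrict] at hbox
  rw [← map_sum, ← potential_apply, norm_sq_boxRestrict hpotential] at hbox
  simpa only [norm_sq_boxRestrict (hposition _)] using hbox

end QuadraticEstimate

/-! ### Dirac operators -/

section MatrixBounds

variable {ι κ : Type*} [Fintype κ]

theorem dotProduct_self_nonneg (w : κ → ℝ) : 0 ≤ w ⬝ᵥ w :=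
  Finset.sum_nonneg fun k _ => mul_self_nonneg (w k)

theorem exists_mulVec_dotProduct_mulVec_le (B : Matrix κ κ ℝ) :
    ∃ C, 0 ≤ C ∧ ∀ w, (B *ᵥ w) ⬝ᵥ (B *ᵥ w) ≤ C * (w ⬝ᵥ w) := by
  refine ⟨∑ i, ∑ j, B i j ^ 2, by positivity, fun w => ?_⟩
  rw [dotProduct, Finset.sum_mul]
  refine Finset.sum_le_sum fun i _ => ?_
  simpa only [mulVec, dotProduct, sq] using
    Finset.sum_mul_sq_le_sq_mul_sq Finset.univ (fun j => B i j) w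

theorem exists_abs_mulVec_dotProduct_le (B : Matrix κ κ ℝ) :
    ∃ C, ∀ w, |(B *ᵥ w) ⬝ᵥ w| ≤ C * (w ⬝ᵥ w) := by
  obtain ⟨C, -, hB⟩ := exists_mulVec_dotProduct_mulVec_le B
  refine ⟨C + 1, fun w => ?_⟩
  have hadd := dotProduct_self_nonneg (B *ᵥ w + w)
  have hsub := dotProduct_self_nonneg (B *ᵥ w - w)
  simp only [add_dotProduct, dotProduct_add, sub_dotProduct, dotProduct_sub,
    dotProduct_comm w (B *ᵥ w)] at hadd hsub
  have hnonneg := (dotProduct_self_nonneg (B *ᵥ w)).trans (hB w)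
  exact abs_le.2 ⟨by linarith [hB w, hnonneg], by linarith [hB w, hnonneg]⟩

theorem pairing_mono {u v y z : HermiteSeq ι κ} (hv : v ∈ finiteSeq ι κ) (hu : u ∈ finiteSeq ι κ)
    (h : ∀ a, y a ⬝ᵥ v a ≤ z a ⬝ᵥ u a) : pairing y v ≤ pairing z u :=
  (summable_dotProduct hv).tsum_le_tsum h (summable_dotProduct hu)

theorem pairing_zero_left (v : HermiteSeq ι κ) : pairing 0 v = 0 := by
  simp [pairing]

theorem pairing_zero_right (y : HermiteSeq ι κ) : pairing y 0 = 0 := by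
  simp [pairing]

theorem pairing_sum_left {α : Type*} (s : Finset α) (y : α → HermiteSeq ι κ) {v : HermiteSeq ι κ}
    (hv : v ∈ finiteSeq ι κ) : pairing (∑ i ∈ s, y i) v = ∑ i ∈ s, pairing (y i) v := by
  classical
  induction s using Finset.induction_on with
  | empty => exact pairing_zero_left v
  | insert i s hi ih => rw [Finset.sum_insert hi, Finset.sum_insert hi, pairing_add_left hv, ih]

variable [DecidableEq κ]

theorem exists_pairing_coeffAction_le (B : Matrix κ κ ℝ) :
    ∃ C, 0 ≤ C ∧ ∀ u ∈ finiteSeq ι κ, pairing (coeffAction B u) (coeffAction B u) ≤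
      C * pairing u u := by
  obtain ⟨C, hC, hB⟩ := exists_mulVec_dotProduct_mulVec_le B
  refine ⟨C, hC, fun u hu => ?_⟩
  rw [← pairing_smul_left]
  refine pairing_mono ((isFormalAdjoint_coeffAction B).map_mem u hu) hu fun a => ?_
  rw [Pi.smul_apply, smul_dotProduct]
  exact hB (u a)

theorem abs_pairing_coeffAction_le {B : Matrix κ κ ℝ} {C : ℝ}
    (hB : ∀ w, |(B *ᵥ w) ⬝ᵥ w| ≤ C * (w ⬝ᵥ w)) {u : HermiteSeq ι κ} (hu : u ∈ finiteSeq ι κ) :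
    |pairing (coeffAction B u) u| ≤ C * pairing u u := by
  have hbound (a : ι → ℕ) := abs_le.1 (hB (u a))
  rw [abs_le, ← neg_mul, ← pairing_smul_left, ← pairing_smul_left]
  constructor
  · refine pairing_mono hu hu fun a => ?_
    rw [Pi.smul_apply, smul_dotProduct, smul_eq_mul, neg_mul]
    exact (hbound a).1
  · refine pairing_mono hu hu fun a => ?_
    rw [Pi.smul_apply, smul_dotProduct, smul_eq_mul]
    exact (hbound a).2

end MatrixBounds

section Dirac

variable {ι κ : Type*} [DecidableEq ι]

theorem pairing_momentum_self [Fintype κ] (i : ι) {u : HermiteSeq ι κ} (hu : u ∈ finiteSeq ι κ) :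
    pairing (momentum i u) (momentum i u) = -pairing (momentum i (momentum i u)) u := by
  rw [(isFormalAdjoint_momentum i).pairing_eq _ u hu, LinearMap.smul_apply, pairing_smul_left,
    neg_one_mul]

variable [Fintype ι]

/-- The Hamiltonian of the harmonic oscillator. -/
noncomputable def oscillator : Module.End ℝ (HermiteSeq ι κ) :=
  ∑ i, (position i * position i - momentum i * momentum i)

theorem oscillator_apply (u : HermiteSeq ι κ) (a : ι → ℕ) :
    oscillator u a = (4 * ∑ i, (a i : ℝ) + 2 * Fintype.card ι) • u a := by
  simp only [oscillator, position_mul_self_sub_momentum_mul_self, LinearMap.sum_apply,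
    Finset.sum_apply, LinearMap.add_apply, LinearMap.smul_apply, Pi.add_apply, Pi.smul_apply,
    Module.End.mul_apply, raising_lowering_apply, Module.End.one_apply, Finset.sum_add_distrib,
    ← Finset.smul_sum, ← Finset.sum_smul, Finset.sum_const, Finset.card_univ]
  module

variable [Fintype κ]

/-- The energy `‖x u‖² + ‖∇ u‖²` of the harmonic oscillator. -/
noncomputable def energy (u : HermiteSeq ι κ) : ℝ :=
  ∑ i, pairing (position i u) (position i u) + ∑ i, pairing (momentum i u) (momentum i u)

theorem pairing_position_le_energy (i : ι) (u : HermiteSeq ι κ) :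
    pairing (position i u) (position i u) ≤ energy u :=
  le_add_of_le_of_nonneg
    (Finset.single_le_sum (f := fun i => pairing (position i u) (position i u))
      (fun _ _ => pairing_self_nonneg _) (Finset.mem_univ i))
    (Finset.sum_nonneg fun _ _ => pairing_self_nonneg _)

theorem energy_eq_pairing_oscillator {u : HermiteSeq ι κ} (hu : u ∈ finiteSeq ι κ) :
    energy u = pairing (oscillator u) u := by
  simp only [energy, (isFormalAdjoint_position _).pairing_eq _ u hu, pairing_momentum_self _ hu,
    oscillator, LinearMap.sum_apply, pairing_sum_left _ _ hu, LinearMap.sub_apply,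
    Module.End.mul_apply, ← Finset.sum_add_distrib]
  exact Finset.sum_congr rfl fun i _ => by rw [pairing_sub_left hu, sub_eq_add_neg]

theorem mul_pairing_le_energy {d : ℕ} {u : HermiteSeq ι κ} (hu : u ∈ finiteSeq ι κ)
    (hd : ∀ a, u a ≠ 0 → d ≤ ∑ i, a i) : 4 * d * pairing u u ≤ energy u := by
  rw [energy_eq_pairing_oscillator hu, ← pairing_smul_left]
  refine pairing_mono hu hu fun a => ?_
  rcases eq_or_ne (u a) 0 with ha | ha
  · simp only [ha, dotProduct_zero, le_refl]
  have hdeg : (d : ℝ) ≤ ∑ i, (a i : ℝ) := by exact_mod_cast hd a ha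
  rw [oscillator_apply, Pi.smul_apply, smul_dotProduct, smul_dotProduct,
    smul_eq_mul, smul_eq_mul]
  refine mul_le_mul_of_nonneg_right ?_ (dotProduct_self_nonneg _)
  linarith [Nat.cast_nonneg (α := ℝ) (Fintype.card ι)]

variable [DecidableEq κ]

/-- The constant-coefficient operator `∑ e i * ∂ i`. -/
noncomputable def kinetic (e : ι → Matrix κ κ ℝ) : Module.End ℝ (HermiteSeq ι κ) :=
  ∑ i, coeffAction (e i) * momentum i

/-- The Dirac operator `∑ e i * ∂ i` perturbed by the linear potential `∑ x i * α i`. -/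
noncomputable def dirac (α e : ι → Matrix κ κ ℝ) : Module.End ℝ (HermiteSeq ι κ) :=
  potential α + kinetic e

theorem dirac_apply (α e : ι → Matrix κ κ ℝ) (u : HermiteSeq ι κ) (a : ι → ℕ) :
    dirac α e u a = ∑ i, (α i *ᵥ position i u a + e i *ᵥ momentum i u a) := by
  simp only [dirac, potential, kinetic, LinearMap.add_apply, LinearMap.sum_apply, Pi.add_apply,
    Finset.sum_apply, Module.End.mul_apply, coeffAction_apply, Finset.sum_add_distrib]

/-- The algebraic conditions on the coefficients of a Dirac operator that make its formal adjoint
`η` times itself and make `potential α` and `kinetic e` anticommute up to order zero. -/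
structure IsDiracSymbol (η : ℝ) (α e : ι → Matrix κ κ ℝ) : Prop where
  transpose_eq : ∀ i, (α i)ᵀ = η • α i
  isCliffordFamily : IsCliffordFamily (-η) e
  anticomm : ∀ i j, α i * e j = -(e j * α i)

namespace IsDiracSymbol

variable {η : ℝ} {α e : ι → Matrix κ κ ℝ}

theorem isFormalAdjoint_potential (h : IsDiracSymbol η α e) :
    IsFormalAdjoint (potential α) (η • potential α) := by
  rw [potential, Finset.smul_sum]
  refine IsFormalAdjoint.sum _ fun i => ?_
  have hadj := (isFormalAdjoint_coeffAction (α i)).mul (isFormalAdjoint_position i)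
  rwa [h.transpose_eq, ← (commute_coeffAction_position _ i).eq, map_smul, smul_mul_assoc] at hadj

theorem isFormalAdjoint_kinetic (h : IsDiracSymbol η α e) :
    IsFormalAdjoint (kinetic e) (η • kinetic e) := by
  rw [kinetic, Finset.smul_sum]
  refine IsFormalAdjoint.sum _ fun i => ?_
  have hadj := (isFormalAdjoint_coeffAction (e i)).mul (isFormalAdjoint_momentum i)
  rwa [(h.isCliffordFamily.isCliffordUnit i).transpose_eq, map_smul, smul_mul_assoc,
    mul_smul_comm, smul_smul, ← (commute_coeffAction_momentum _ i).eq, neg_one_mul, neg_neg] at hadj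

theorem isFormalAdjoint_dirac (h : IsDiracSymbol η α e) :
    IsFormalAdjoint (dirac α e) (η • dirac α e) := by
  rw [dirac, smul_add]
  exact h.isFormalAdjoint_potential.add h.isFormalAdjoint_kinetic

theorem kinetic_mul_self (h : IsDiracSymbol η α e) :
    kinetic e * kinetic e = -η • ∑ i, momentum i * momentum i := by
  rw [kinetic, sum_mul_mul_sum_mul_of_anticomm (fun i j hij => ?_) commute_momentum
    fun i j => commute_coeffAction_momentum _ j, Finset.smul_sum]
  · simp only [← map_mul, (h.isCliffordFamily.isCliffordUnit _).mul_self, map_smul, map_one,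
      smul_mul_assoc, one_mul]
  · beta_reduce
    rw [← map_mul, ← map_mul, h.isCliffordFamily.anticomm hij, map_neg]

theorem potential_mul_kinetic_add (h : IsDiracSymbol η α e) :
    potential α * kinetic e + kinetic e * potential α =
      (-2 : ℝ) • coeffAction (∑ i, α i * e i) := by
  have hcommutator (i j : ι) : (position i * momentum j - momentum j * position i :
      Module.End ℝ (HermiteSeq ι κ)) = if i = j then (-2 : ℝ) • 1 else 0 := by
    split_ifs with hij
    · exact hij ▸ position_mul_momentum_sub_self i
    · exact sub_eq_zero.2 (commute_position_momentum_of_ne hij).eq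
  rw [potential, kinetic, sum_mul_anticommutator_of_anticomm (fun i j => ?_)
    (fun i j => commute_coeffAction_position _ j) fun i j => commute_coeffAction_momentum _ j]
  · simp only [hcommutator, mul_ite, mul_zero, Finset.sum_ite_eq, Finset.mem_univ, if_true,
      mul_smul_comm, mul_one, ← map_mul, ← Finset.smul_sum, map_sum]
  · rw [← map_mul, ← map_mul, ← map_neg, h.anticomm]

theorem dirac_mul_self (h : IsDiracSymbol η α e) :
    dirac α e * dirac α e = potential α * potential α - η • ∑ i, momentum i * momentum i -
      (2 : ℝ) • coeffAction (∑ i, α i * e i) := by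
  have hexpand : dirac α e * dirac α e = potential α * potential α + kinetic e * kinetic e +
      (potential α * kinetic e + kinetic e * potential α) := by
    rw [dirac]
    noncomm_ring
  rw [hexpand, h.kinetic_mul_self, h.potential_mul_kinetic_add]
  module

theorem pairing_dirac_self (hη : η * η = 1) (h : IsDiracSymbol η α e) {u : HermiteSeq ι κ}
    (hu : u ∈ finiteSeq ι κ) :
    pairing (dirac α e u) (dirac α e u) = pairing (potential α u) (potential α u) +
      ∑ i, pairing (momentum i u) (momentum i u) -
        2 * η * pairing (coeffAction (∑ i, α i * e i) u) u := by
  have hpotential := h.isFormalAdjoint_potential.pairing_eq (potential α u) u hu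
  rw [LinearMap.smul_apply, pairing_smul_left] at hpotential
  rw [h.isFormalAdjoint_dirac.pairing_eq _ u hu, LinearMap.smul_apply, ← Module.End.mul_apply,
    h.dirac_mul_self, pairing_smul_left, hpotential]
  simp only [pairing_momentum_self _ hu, LinearMap.sub_apply, LinearMap.smul_apply,
    pairing_sub_left hu, pairing_smul_left, LinearMap.sum_apply,
    pairing_sum_left _ _ hu, Finset.sum_neg_distrib, Module.End.mul_apply]
  linear_combination (-∑ i, pairing (momentum i (momentum i u)) u) * hη

theorem mul_energy_sub_le (hη : η * η = 1) (h : IsDiracSymbol η α e) {c C : ℝ} (hc : c ≤ 1)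
    (hα : IsEllipticPencil c α) (hC : ∀ w, |((∑ i, α i * e i) *ᵥ w) ⬝ᵥ w| ≤ C * (w ⬝ᵥ w))
    {u : HermiteSeq ι κ} (hu : u ∈ finiteSeq ι κ) :
    c * energy u - 2 * C * pairing u u ≤ pairing (dirac α e u) (dirac α e u) := by
  have hη_abs : |η| = 1 := by
    rcases mul_self_eq_one_iff.1 hη with rfl | rfl <;> simp
  have hzero : η * pairing (coeffAction (∑ i, α i * e i) u) u ≤ C * pairing u u := by
    refine (le_abs_self _).trans ?_
    rw [abs_mul, hη_abs, one_mul]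
    exact abs_pairing_coeffAction_le hC hu
  have hmomentum : c * ∑ i, pairing (momentum i u) (momentum i u) ≤
      ∑ i, pairing (momentum i u) (momentum i u) :=
    mul_le_of_le_one_left (Finset.sum_nonneg fun _ _ => pairing_self_nonneg _) hc
  rw [h.pairing_dirac_self hη hu, energy]
  linarith [hα.mul_sum_pairing_position_le hu]

end IsDiracSymbol

end Dirac

/-! ### Truncated kernels -/

section Parity

/-- The multi-indices of even degree. -/
def evenIndices (ι : Type*) [Fintype ι] : Set (ι → ℕ) := {a | Even (∑ i, a i)}

/-- The multi-indices of even degree larger than `d`. -/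
def evenIndicesAbove (ι : Type*) [Fintype ι] (d : ℕ) : Set (ι → ℕ) :=
  {a ∈ evenIndices ι | d < ∑ i, a i}

/-- The multi-indices of even degree at most `d`. -/
def evenIndicesUpTo (ι : Type*) [Fintype ι] (d : ℕ) : Set (ι → ℕ) :=
  {a ∈ evenIndices ι | ∑ i, a i ≤ d}

theorem zero_mem_evenIndicesUpTo (ι : Type*) [Fintype ι] (d : ℕ) : 0 ∈ evenIndicesUpTo ι d :=
  ⟨by simp [evenIndices], by simp⟩

theorem finite_evenIndicesUpTo (ι : Type*) [Fintype ι] (d : ℕ) : (evenIndicesUpTo ι d).Finite := by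
  classical
  exact (Set.finite_Iic fun _ => d).subset fun a ha i =>
    (Finset.single_le_sum (f := a) (fun _ _ => Nat.zero_le _) (Finset.mem_univ i)).trans ha.2

/-- The finitely supported Hermite sequences with support in `S`. -/
def finiteSeqOn {ι : Type*} (κ : Type*) (S : Set (ι → ℕ)) : Submodule ℝ (HermiteSeq ι κ) where
  carrier := {u | u ∈ finiteSeq ι κ ∧ ∀ a ∉ S, u a = 0}
  zero_mem' := ⟨zero_mem _, fun _ _ => rfl⟩
  add_mem' hu hv := ⟨add_mem hu.1 hv.1, fun a ha => by simp [hu.2 a ha, hv.2 a ha]⟩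
  smul_mem' r u hu := ⟨Submodule.smul_mem _ r hu.1, fun a ha => by simp [hu.2 a ha]⟩

theorem single_mem_finiteSeqOn {ι κ : Type*} [DecidableEq (ι → ℕ)] {S : Set (ι → ℕ)} {a : ι → ℕ}
    (ha : a ∈ S) (w : κ → ℝ) : (Pi.single a w : HermiteSeq ι κ) ∈ finiteSeqOn κ S :=
  ⟨single_mem_finiteSeq a w, fun b hb => by
    rw [Pi.single_eq_of_ne (ne_of_mem_of_not_mem ha hb).symm]⟩

theorem pairing_eq_zero_of_disjoint {ι κ : Type*} [Fintype κ] {S : Set (ι → ℕ)}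
    {y v : HermiteSeq ι κ} (hy : ∀ a ∈ S, y a = 0) (hv : ∀ a ∉ S, v a = 0) : pairing y v = 0 := by
  have hterm (a : ι → ℕ) : y a ⬝ᵥ v a = 0 := by
    by_cases ha : a ∈ S
    · rw [hy a ha, zero_dotProduct]
    · rw [hv a ha, dotProduct_zero]
  rw [pairing, tsum_congr hterm, tsum_zero]

variable {ι κ : Type*} [DecidableEq ι] [Fintype ι]

theorem sum_add_single_one (a : ι → ℕ) (i : ι) :
    ∑ j, (a + Pi.single i 1 : ι → ℕ) j = ∑ j, a j + 1 := by
  simp only [Pi.add_apply, Finset.sum_add_distrib, Finset.sum_pi_single', Finset.mem_univ, if_true]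

theorem add_single_mem_evenIndices {a : ι → ℕ} {i : ι} :
    a + Pi.single i 1 ∈ evenIndices ι ↔ a ∉ evenIndices ι := by
  rw [evenIndices, Set.mem_ofPred_eq, Set.mem_ofPred_eq, sum_add_single_one, Nat.even_add_one]

theorem sub_single_mem_evenIndices {a : ι → ℕ} {i : ι} (h : a i ≠ 0) :
    a - Pi.single i 1 ∈ evenIndices ι ↔ a ∉ evenIndices ι := by
  rw [← not_iff_not, not_not, ← add_single_mem_evenIndices (i := i),
    tsub_add_cancel_of_le (single_one_le h)]

variable [Fintype κ] [DecidableEq κ] {α e : ι → Matrix κ κ ℝ} {u : HermiteSeq ι κ} {a : ι → ℕ}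

theorem dirac_apply_eq_zero_of_mem_evenIndices (hu : ∀ a ∉ evenIndices ι, u a = 0)
    (ha : a ∈ evenIndices ι) : dirac α e u a = 0 := by
  have hadd (i : ι) : u (a + Pi.single i 1) = 0 :=
    hu _ (mt add_single_mem_evenIndices.1 (not_not.2 ha))
  have hsub (i : ι) (h : a i ≠ 0) : u (a - Pi.single i 1) = 0 :=
    hu _ (mt (sub_single_mem_evenIndices h).1 (not_not.2 ha))
  simp only [dirac_apply, position_apply_eq_zero (hadd _) (hsub _),
    momentum_apply_eq_zero (hadd _) (hsub _), mulVec_zero, add_zero, Finset.sum_const_zero]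

theorem dirac_apply_eq_zero_of_notMem_evenIndices (hu : ∀ a ∈ evenIndices ι, u a = 0)
    (ha : a ∉ evenIndices ι) : dirac α e u a = 0 := by
  have hadd (i : ι) : u (a + Pi.single i 1) = 0 := hu _ (add_single_mem_evenIndices.2 ha)
  have hsub (i : ι) (h : a i ≠ 0) : u (a - Pi.single i 1) = 0 :=
    hu _ ((sub_single_mem_evenIndices h).2 ha)
  simp only [dirac_apply, position_apply_eq_zero (hadd _) (hsub _),
    momentum_apply_eq_zero (hadd _) (hsub _), mulVec_zero, add_zero, Finset.sum_const_zero]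

end Parity

section TruncatedKernel

/-- The square-summable Hermite sequences. -/
noncomputable abbrev HermiteL2 (ι κ : Type*) [Fintype κ] :=
  lp (fun _ : ι → ℕ => EuclideanSpace ℝ κ) 2

variable {ι κ : Type*} [Fintype κ]

theorem memℓp_two_iff_summable_dotProduct {y : HermiteSeq ι κ} :
    Memℓp (fun a => WithLp.toLp 2 (y a)) 2 ↔ Summable fun a => y a ⬝ᵥ y a := by
  rw [memℓp_gen_iff (by norm_num)]
  refine iff_of_eq (congrArg Summable (funext fun a => ?_))
  rw [ENNReal.toReal_ofNat, Real.rpow_ofNat, EuclideanSpace.real_norm_sq_eq]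
  exact Finset.sum_congr rfl fun k _ => sq _

/-- The inclusion of finitely supported sequences into the square-summable ones. -/
noncomputable def toHermiteL2 (ι κ : Type*) [Fintype κ] : finiteSeq ι κ →ₗ[ℝ] HermiteL2 ι κ where
  toFun u := ⟨fun a => WithLp.toLp 2 (u.1 a),
    memℓp_two_iff_summable_dotProduct.2 (summable_dotProduct u.2)⟩
  map_add' _ _ := rfl
  map_smul' _ _ := rfl

/-- The sequence underlying a square-summable one. -/
noncomputable def ofHermiteL2 (ι κ : Type*) [Fintype κ] : HermiteL2 ι κ →ₗ[ℝ] HermiteSeq ι κ where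
  toFun y a := (y a).ofLp
  map_add' _ _ := rfl
  map_smul' _ _ := rfl

theorem ofHermiteL2_injective : Function.Injective (ofHermiteL2 ι κ) := fun _ _ h =>
  lp.ext (funext fun a => WithLp.ofLp_injective 2 (congrFun h a))

theorem mem_range_ofHermiteL2 {y : HermiteSeq ι κ} :
    y ∈ LinearMap.range (ofHermiteL2 ι κ) ↔ Summable fun a => y a ⬝ᵥ y a := by
  rw [← memℓp_two_iff_summable_dotProduct]
  exact ⟨fun ⟨z, hz⟩ => hz ▸ lp.memℓp z, fun hy => ⟨⟨_, hy⟩, rfl⟩⟩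

theorem inner_toHermiteL2 (y : HermiteL2 ι κ) (u : finiteSeq ι κ) :
    inner ℝ y (toHermiteL2 ι κ u) = pairing (ofHermiteL2 ι κ y) u := by
  rw [lp.inner_eq_tsum, pairing]
  refine tsum_congr fun a => ?_
  rw [PiLp.inner_apply, dotProduct]
  exact Finset.sum_congr rfl fun k _ => mul_comm _ _

theorem norm_toHermiteL2 (u : finiteSeq ι κ) :
    ‖toHermiteL2 ι κ u‖ = √(pairing (u : HermiteSeq ι κ) u) := by
  rw [← Real.sqrt_sq (norm_nonneg _), ← real_inner_self_eq_norm_sq, inner_toHermiteL2]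
  rfl

variable [DecidableEq ι] [Fintype ι] [DecidableEq κ]

/-- The square-summable odd solutions `y` of `D y = 0` in even degrees larger than `d`, where `D` is
the Dirac operator `dirac α e`. It is the cokernel of `D` on even sequences of degree larger
than `d`. -/
noncomputable def truncatedKernel (α e : ι → Matrix κ κ ℝ) (d : ℕ) :
    Submodule ℝ (HermiteSeq ι κ) where
  carrier := {y | y ∈ LinearMap.range (ofHermiteL2 ι κ) ∧ (∀ a ∈ evenIndices ι, y a = 0) ∧
    ∀ a ∈ evenIndicesAbove ι d, dirac α e y a = 0}
  zero_mem' := ⟨zero_mem _, fun _ _ => rfl, fun _ _ => by rw [map_zero]; rfl⟩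
  add_mem' {y z} hy hz := ⟨add_mem hy.1 hz.1,
    fun a ha => by rw [Pi.add_apply, hy.2.1 a ha, hz.2.1 a ha, add_zero],
    fun a ha => by rw [map_add, Pi.add_apply, hy.2.2 a ha, hz.2.2 a ha, add_zero]⟩
  smul_mem' r y hy := ⟨Submodule.smul_mem _ r hy.1,
    fun a ha => by rw [Pi.smul_apply, hy.2.1 a ha, smul_zero],
    fun a ha => by rw [map_smul, Pi.smul_apply, hy.2.2 a ha, smul_zero]⟩

theorem mem_truncatedKernel {α e : ι → Matrix κ κ ℝ} {d : ℕ} {y : HermiteSeq ι κ} :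
    y ∈ truncatedKernel α e d ↔ y ∈ LinearMap.range (ofHermiteL2 ι κ) ∧
      (∀ a ∈ evenIndices ι, y a = 0) ∧ ∀ a ∈ evenIndicesAbove ι d, dirac α e y a = 0 := Iff.rfl

namespace IsDiracSymbol

variable {η : ℝ} {α e : ι → Matrix κ κ ℝ}

/-- The sum of the Dirac operator on even sequences of degree larger than `d` and the inclusion of
all even sequences, so that the orthogonal complement of the range consists of odd sequences. -/
noncomputable def truncation (h : IsDiracSymbol η α e) (d : ℕ) :
    finiteSeqOn κ (evenIndicesAbove ι d) × finiteSeqOn κ (evenIndices ι) →ₗ[ℝ] HermiteL2 ι κ :=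
  toHermiteL2 ι κ ∘ₗ LinearMap.codRestrict (finiteSeq ι κ)
    (dirac α e ∘ₗ Submodule.subtype _ ∘ₗ LinearMap.fst ℝ _ _ +
      Submodule.subtype _ ∘ₗ LinearMap.snd ℝ _ _)
    fun x => add_mem (h.isFormalAdjoint_dirac.map_mem _ x.1.2.1) x.2.2.1

theorem truncation_apply (h : IsDiracSymbol η α e) {d : ℕ}
    (x : finiteSeqOn κ (evenIndicesAbove ι d) × finiteSeqOn κ (evenIndices ι)) :
    h.truncation d x = toHermiteL2 ι κ ⟨dirac α e x.1 + x.2,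
      add_mem (h.isFormalAdjoint_dirac.map_mem _ x.1.2.1) x.2.2.1⟩ := rfl

theorem inner_truncation (h : IsDiracSymbol η α e) {d : ℕ} (y : HermiteL2 ι κ)
    (x : finiteSeqOn κ (evenIndicesAbove ι d) × finiteSeqOn κ (evenIndices ι)) :
    inner ℝ y (h.truncation d x) = η * pairing (dirac α e (ofHermiteL2 ι κ y)) x.1 +
      pairing (ofHermiteL2 ι κ y) x.2 := by
  rw [truncation_apply, inner_toHermiteL2,
    pairing_add_right (h.isFormalAdjoint_dirac.map_mem _ x.1.2.1) x.2.2.1,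
    h.isFormalAdjoint_dirac.pairing_eq _ _ x.1.2.1, LinearMap.smul_apply, pairing_smul_left]

theorem mem_orthogonal_range_truncation (hη : η * η = 1) (h : IsDiracSymbol η α e) {d : ℕ}
    {y : HermiteL2 ι κ} : y ∈ (LinearMap.range (h.truncation d))ᗮ ↔
      ofHermiteL2 ι κ y ∈ truncatedKernel α e d := by
  have hη0 : η ≠ 0 := fun h0 => by simp [h0] at hη
  rw [Submodule.mem_orthogonal', mem_truncatedKernel]
  constructor
  · intro hy
    replace hy x := (h.inner_truncation y x).symm.trans (hy _ ⟨x, rfl⟩)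
    refine ⟨⟨y, rfl⟩, fun a ha => ?_, fun a ha => ?_⟩
    · simpa [pairing_single, pairing_zero_right] using
        hy (0, ⟨_, single_mem_finiteSeqOn ha (ofHermiteL2 ι κ y a)⟩)
    · simpa [pairing_single, pairing_zero_right, hη0] using
        hy (⟨_, single_mem_finiteSeqOn ha (dirac α e (ofHermiteL2 ι κ y) a)⟩, 0)
  · rintro ⟨-, hy_even, hy_dirac⟩ _ ⟨x, rfl⟩
    rw [h.inner_truncation, pairing_eq_zero_of_disjoint hy_dirac x.1.2.2,
      pairing_eq_zero_of_disjoint hy_even x.2.2.2, mul_zero, add_zero]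

theorem rank_orthogonal_range_truncation (hη : η * η = 1) (h : IsDiracSymbol η α e) (d : ℕ) :
    Module.rank ℝ (LinearMap.range (h.truncation d))ᗮ =
      Module.rank ℝ (truncatedKernel α e d) := by
  let toKernel : (LinearMap.range (h.truncation d))ᗮ →ₗ[ℝ] truncatedKernel α e d :=
    (ofHermiteL2 ι κ ∘ₗ Submodule.subtype _).codRestrict _
      fun y => (h.mem_orthogonal_range_truncation hη).1 y.2
  refine (LinearEquiv.ofBijective toKernel ⟨fun y z hyz => ?_, fun y => ?_⟩).rank_eq
  · exact Subtype.ext (ofHermiteL2_injective (congrArg Subtype.val hyz))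
  · obtain ⟨z, hz⟩ := y.2.1
    exact ⟨⟨z, (h.mem_orthogonal_range_truncation hη).2 (hz ▸ y.2)⟩, Subtype.ext hz⟩

theorem sqrt_pairing_dirac_le_norm_truncation (h : IsDiracSymbol η α e) {d : ℕ}
    (x : finiteSeqOn κ (evenIndicesAbove ι d) × finiteSeqOn κ (evenIndices ι)) :
    √(pairing (dirac α e x.1) (dirac α e x.1)) ≤ ‖h.truncation d x‖ := by
  have hdirac : dirac α e x.1 ∈ finiteSeq ι κ := h.isFormalAdjoint_dirac.map_mem _ x.1.2.1
  have horth : pairing (dirac α e x.1) x.2 = 0 := pairing_eq_zero_of_disjoint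
    (fun _ => dirac_apply_eq_zero_of_mem_evenIndices fun a ha => x.1.2.2 a fun ha' => ha ha'.1)
    x.2.2.2
  rw [truncation_apply, norm_toHermiteL2]
  refine Real.sqrt_le_sqrt ?_
  rw [pairing_add_right hdirac x.2.2.1, pairing_add_left hdirac, pairing_add_left x.2.2.1,
    pairing_comm (x.2 : HermiteSeq ι κ), horth]
  linarith [pairing_self_nonneg (x.2 : HermiteSeq ι κ)]

end IsDiracSymbol

end TruncatedKernel

section Homotopy

variable {ι κ : Type*} [Fintype κ] [DecidableEq κ]

theorem IsDiracSymbol.lineMap {η : ℝ} {α₀ α₁ e : ι → Matrix κ κ ℝ} (h₀ : IsDiracSymbol η α₀ e)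
    (h₁ : IsDiracSymbol η α₁ e) (t : ℝ) :
    IsDiracSymbol η (AffineMap.lineMap α₀ α₁ t) e where
  transpose_eq i := by
    simp only [AffineMap.lineMap_apply_module, Pi.add_apply, Pi.smul_apply, transpose_add,
      transpose_smul, h₀.transpose_eq, h₁.transpose_eq, smul_add, smul_comm η]
  isCliffordFamily := h₀.isCliffordFamily
  anticomm i j := by
    simp only [AffineMap.lineMap_apply_module, Pi.add_apply, Pi.smul_apply, add_mul, mul_add,
      smul_mul_assoc, mul_smul_comm, h₀.anticomm, h₁.anticomm, smul_neg, neg_add]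

theorem exists_forall_abs_lineMap_le [Fintype ι] (α₀ α₁ e : ι → Matrix κ κ ℝ) :
    ∃ C, ∀ t ∈ unitInterval, ∀ w,
      |((∑ i, AffineMap.lineMap α₀ α₁ t i * e i) *ᵥ w) ⬝ᵥ w| ≤ C * (w ⬝ᵥ w) := by
  obtain ⟨C₀, hbound₀⟩ := exists_abs_mulVec_dotProduct_le (∑ i, α₀ i * e i)
  obtain ⟨C₁, hbound₁⟩ := exists_abs_mulVec_dotProduct_le (∑ i, α₁ i * e i)
  refine ⟨C₀ + C₁, fun t ht w => ?_⟩
  have hsum : ∑ i, AffineMap.lineMap α₀ α₁ t i * e i =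
      (1 - t) • ∑ i, α₀ i * e i + t • ∑ i, α₁ i * e i := by
    simp only [AffineMap.lineMap_apply_module, Pi.add_apply, Pi.smul_apply, add_mul,
      smul_mul_assoc, Finset.sum_add_distrib, Finset.smul_sum]
  have hle {s : ℝ} (hs : s ∈ unitInterval) {B : Matrix κ κ ℝ} {C : ℝ}
      (hB : |(B *ᵥ w) ⬝ᵥ w| ≤ C * (w ⬝ᵥ w)) : |s * ((B *ᵥ w) ⬝ᵥ w)| ≤ C * (w ⬝ᵥ w) := by
    rw [abs_mul, abs_of_nonneg hs.1]
    exact (mul_le_of_le_one_left (abs_nonneg _) hs.2).trans hB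
  rw [hsum, add_mulVec, smul_mulVec, smul_mulVec, add_dotProduct, smul_dotProduct,
    smul_dotProduct, add_mul]
  exact (abs_add_le _ _).trans (add_le_add (hle (Set.Icc.mem_iff_one_sub_mem.1 ht) (hbound₀ w))
    (hle ht (hbound₁ w)))

variable [DecidableEq ι]

theorem coeffAction_position_mem_finiteSeq (B : Matrix κ κ ℝ) (i : ι) {u : HermiteSeq ι κ}
    (hu : u ∈ finiteSeq ι κ) : coeffAction B (position i u) ∈ finiteSeq ι κ :=
  (isFormalAdjoint_coeffAction B).map_mem _ ((isFormalAdjoint_position i).map_mem u hu)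

variable [Fintype ι]

theorem potential_mem_finiteSeq (β : ι → Matrix κ κ ℝ) {u : HermiteSeq ι κ}
    (hu : u ∈ finiteSeq ι κ) : potential β u ∈ finiteSeq ι κ := by
  rw [potential_apply]
  exact sum_mem fun i _ => coeffAction_position_mem_finiteSeq (β i) i hu

theorem exists_norm_potential_le (β : ι → Matrix κ κ ℝ) :
    ∃ L, 0 ≤ L ∧ ∀ u, ∀ hu : u ∈ finiteSeq ι κ,
      ‖toHermiteL2 ι κ ⟨potential β u, potential_mem_finiteSeq β hu⟩‖ ≤ L * √(energy u) := by
  choose C hC hβ using fun i => exists_pairing_coeffAction_le (ι := ι) (β i)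
  refine ⟨∑ i, √(C i), Finset.sum_nonneg fun i _ => Real.sqrt_nonneg _, fun u hu => ?_⟩
  let term (i : ι) : finiteSeq ι κ := ⟨_, coeffAction_position_mem_finiteSeq (β i) i hu⟩
  have hsum : ⟨potential β u, potential_mem_finiteSeq β hu⟩ = ∑ i, term i :=
    Subtype.ext ((potential_apply β u).trans (map_sum (finiteSeq ι κ).subtype term _).symm)
  rw [hsum, map_sum, Finset.sum_mul]
  refine norm_sum_le_of_le _ fun i _ => ?_
  rw [norm_toHermiteL2, ← Real.sqrt_mul (hC i)]
  exact Real.sqrt_le_sqrt ((hβ i _ ((isFormalAdjoint_position i).map_mem u hu)).trans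
    (mul_le_mul_of_nonneg_left (pairing_position_le_energy i u) (hC i)))

theorem dirac_lineMap_sub_dirac_lineMap (α₀ α₁ e : ι → Matrix κ κ ℝ) (t t' : ℝ)
    (u : HermiteSeq ι κ) :
    dirac (AffineMap.lineMap α₀ α₁ t) e u - dirac (AffineMap.lineMap α₀ α₁ t') e u =
      (t - t') • potential (α₁ - α₀) u := by
  simp only [dirac, LinearMap.add_apply, add_sub_add_right_eq_sub, potential_apply,
    AffineMap.lineMap_apply_module, Pi.add_apply, Pi.smul_apply, Pi.sub_apply, map_add, map_sub,
    map_smul, LinearMap.smul_apply, LinearMap.sub_apply, Finset.smul_sum,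
    ← Finset.sum_sub_distrib]
  exact Finset.sum_congr rfl fun i _ => by module

namespace IsDiracSymbol

variable {η c : ℝ} {α₀ α₁ e : ι → Matrix κ κ ℝ}

theorem half_mul_energy_le (hη : η * η = 1) {α : ι → Matrix κ κ ℝ} (h : IsDiracSymbol η α e)
    {C : ℝ} (hc0 : 0 ≤ c) (hc1 : c ≤ 1) (hα : IsEllipticPencil c α)
    (hC : ∀ w, |((∑ i, α i * e i) *ᵥ w) ⬝ᵥ w| ≤ C * (w ⬝ᵥ w)) {d : ℕ} (hd : C ≤ c * d)
    {u : HermiteSeq ι κ} (hu : u ∈ finiteSeqOn κ (evenIndicesAbove ι d)) :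
    c / 2 * energy u ≤ pairing (dirac α e u) (dirac α e u) := by
  have hgarding := h.mul_energy_sub_le hη hc1 hα hC hu.1
  have henergy : 4 * d * pairing u u ≤ energy u := mul_pairing_le_energy hu.1
    fun a ha => (not_imp_comm.1 (hu.2 a) ha).2.le
  have hpairing := mul_le_mul_of_nonneg_right hd (pairing_self_nonneg u)
  have := mul_le_mul_of_nonneg_left henergy (div_nonneg hc0 zero_le_two)
  linarith

theorem exists_rank_truncatedKernel_eq (hη : η * η = 1) (h₀ : IsDiracSymbol η α₀ e)
    (h₁ : IsDiracSymbol η α₁ e) (hc0 : 0 < c) (hc1 : c ≤ 1)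
    (hα : ∀ t ∈ unitInterval, IsEllipticPencil c (AffineMap.lineMap α₀ α₁ t)) :
    ∃ d, Module.rank ℝ (truncatedKernel α₀ e d) = Module.rank ℝ (truncatedKernel α₁ e d) := by
  obtain ⟨C, hC⟩ := exists_forall_abs_lineMap_le α₀ α₁ e
  obtain ⟨L, hL, hpotential⟩ := exists_norm_potential_le (α₁ - α₀)
  obtain ⟨d, hd⟩ := exists_nat_ge (C / c)
  rw [div_le_iff₀' hc0] at hd
  have h (t : unitInterval) := h₀.lineMap h₁ t
  refine ⟨d, ?_⟩
  have hrank := rank_orthogonal_range_eq_of_lipschitz (T := fun t => (h t).truncation d)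
    (p := fun x => √(energy x.1.1)) (Real.sqrt_pos.2 (half_pos hc0)) hL (fun t x => ?lower)
    (fun t t' x => ?lipschitz) 0 1
  case lower =>
    rw [← Real.sqrt_mul (half_pos hc0).le]
    exact (Real.sqrt_le_sqrt ((h t).half_mul_energy_le hη hc0.le hc1 (hα t t.2) (hC t t.2) hd
      x.1.2)).trans ((h t).sqrt_pairing_dirac_le_norm_truncation x)
  case lipschitz =>
    have hsub : (h t).truncation d x - (h t').truncation d x = ((t : ℝ) - t') •
        toHermiteL2 ι κ ⟨_, potential_mem_finiteSeq (α₁ - α₀) x.1.2.1⟩ := by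
      rw [truncation_apply, truncation_apply, ← map_sub, ← map_smul]
      refine congrArg _ (Subtype.ext ?_)
      exact (add_sub_add_right_eq_sub _ _ _).trans (dirac_lineMap_sub_dirac_lineMap α₀ α₁ e t t' _)
    rw [hsub, norm_smul, ← dist_eq_norm, ← Subtype.dist_eq, mul_comm L, mul_assoc]
    exact mul_le_mul_of_nonneg_left (hpotential _ x.1.2.1) dist_nonneg
  simp only [rank_orthogonal_range_truncation hη, Set.Icc.coe_zero, Set.Icc.coe_one] at hrank
  rwa [AffineMap.lineMap_apply_zero, AffineMap.lineMap_apply_one] at hrank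

end IsDiracSymbol

end Homotopy

section CliffordPotential

variable {ι κ : Type*}

/-- The sum of the squares of the annihilation matrices `α i - e i`, which is four times the fermion
number operator when `α` and `e` are Clifford families. -/
def fermionNumber [Fintype ι] [Fintype κ] (α e : ι → Matrix κ κ ℝ) : Matrix κ κ ℝ :=
  ∑ i, (α i - e i)ᵀ * (α i - e i)

theorem mulVec_fermionNumber_eq_zero [Fintype ι] [Fintype κ] {α e : ι → Matrix κ κ ℝ} {w : κ → ℝ} :
    fermionNumber α e *ᵥ w = 0 ↔ ∀ i, (α i - e i) *ᵥ w = 0 := by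
  constructor
  · intro hw i
    have hsum : ∑ i, ((α i - e i) *ᵥ w) ⬝ᵥ ((α i - e i) *ᵥ w) = w ⬝ᵥ (fermionNumber α e *ᵥ w) := by
      simp only [fermionNumber, sum_mulVec, dotProduct_sum, ← mulVec_mulVec, dotProduct_mulVec,
        vecMul_transpose]
    rw [hw, dotProduct_zero] at hsum
    exact dotProduct_self_eq_zero.1 ((Finset.sum_eq_zero_iff_of_nonneg
      fun i _ => dotProduct_self_nonneg _).1 hsum i (Finset.mem_univ i))
  · intro hw
    simp only [fermionNumber, sum_mulVec, ← mulVec_mulVec, hw, mulVec_zero, Finset.sum_const_zero]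

theorem isUnit_smul_one_add_fermionNumber [Fintype ι] [Fintype κ] [DecidableEq κ]
    (α e : ι → Matrix κ κ ℝ) {r : ℝ} (hr : 0 < r) : IsUnit (r • 1 + fermionNumber α e) := by
  have hnonneg : (fermionNumber α e).PosSemidef :=
    posSemidef_sum _ fun i _ => posSemidef_conjTranspose_mul_self (α i - e i)
  exact ((PosDef.one.smul hr).add_posSemidef hnonneg).isUnit

variable [Fintype κ] [DecidableEq κ]

namespace IsDiracSymbol

variable {η : ℝ} {α e : ι → Matrix κ κ ℝ}

theorem mul_anticomm (h : IsDiracSymbol η α e) (i j : ι) : e i * α j = -(α j * e i) :=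
  neg_eq_iff_eq_neg.1 (h.anticomm j i).symm

theorem transpose_sub (h : IsDiracSymbol η α e) (i : ι) : (α i - e i)ᵀ = η • (α i + e i) := by
  rw [Matrix.transpose_sub, h.transpose_eq, (h.isCliffordFamily.isCliffordUnit i).transpose_eq]
  module

theorem sub_mul_sub_self (h : IsDiracSymbol η α e) (hα : IsCliffordFamily η α) (i : ι) :
    (α i - e i) * (α i - e i) = 0 := by
  simp only [sub_mul, mul_sub, (hα.isCliffordUnit i).mul_self,
    (h.isCliffordFamily.isCliffordUnit i).mul_self, h.mul_anticomm]
  module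

theorem add_mul_sub_add_sub_mul_add (h : IsDiracSymbol η α e) (hα : IsCliffordFamily η α) (i : ι) :
    (α i + e i) * (α i - e i) + (α i - e i) * (α i + e i) = (4 * η) • 1 := by
  simp only [add_mul, sub_mul, mul_add, mul_sub, (hα.isCliffordUnit i).mul_self,
    (h.isCliffordFamily.isCliffordUnit i).mul_self]
  module

theorem sub_mul_sub_anticomm (h : IsDiracSymbol η α e) (hα : IsCliffordFamily η α) {i j : ι}
    (hij : i ≠ j) : (α i - e i) * (α j - e j) = -((α j - e j) * (α i - e i)) := by
  simp only [sub_mul, mul_sub, hα.anticomm hij, h.isCliffordFamily.anticomm hij, h.anticomm i j,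
    h.mul_anticomm i j]
  abel

theorem sub_mul_add_anticomm (h : IsDiracSymbol η α e) (hα : IsCliffordFamily η α) {i j : ι}
    (hij : i ≠ j) : (α i - e i) * (α j + e j) = -((α j + e j) * (α i - e i)) := by
  simp only [sub_mul, mul_sub, add_mul, mul_add, hα.anticomm hij, h.isCliffordFamily.anticomm hij,
    h.anticomm i j, h.mul_anticomm i j]
  abel

variable [Fintype ι]

theorem fermionNumber_eq (hη : η * η = 1) (h : IsDiracSymbol η α e) (hα : IsCliffordFamily η α) :
    fermionNumber α e = (2 * Fintype.card ι : ℝ) • 1 - (2 * η) • ∑ i, α i * e i := by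
  have hterm (i : ι) : (α i - e i)ᵀ * (α i - e i) = (2 : ℝ) • 1 - (2 * η) • (α i * e i) := by
    simp only [h.transpose_sub, smul_mul_assoc, add_mul, mul_sub, (hα.isCliffordUnit i).mul_self,
      (h.isCliffordFamily.isCliffordUnit i).mul_self, h.mul_anticomm]
    linear_combination (norm := module) (2 : ℝ) • congrArg (· • (1 : Matrix κ κ ℝ)) hη
  simp only [fermionNumber, hterm, Finset.sum_sub_distrib, Finset.sum_const, Finset.card_univ,
    ← Finset.smul_sum]
  module

theorem fermionNumber_mul_add (hη : η * η = 1) (h : IsDiracSymbol η α e)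
    (hα : IsCliffordFamily η α) (j : ι) :
    fermionNumber α e * (α j + e j) = (α j + e j) * ((4 : ℝ) • 1 + fermionNumber α e) := by
  classical
  have hself : α j * e j * (α j + e j) = (α j + e j) * (α j * e j) - (2 * η) • (α j + e j) := by
    have hα_sq := (hα.isCliffordUnit j).mul_self
    have he_sq := (h.isCliffordFamily.isCliffordUnit j).mul_self
    rw [mul_add, mul_assoc, h.mul_anticomm, mul_neg, ← mul_assoc, hα_sq, mul_assoc, he_sq, add_mul,
      ← mul_assoc, hα_sq, ← mul_assoc, h.mul_anticomm, neg_mul, mul_assoc, he_sq]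
    simp only [smul_mul_assoc, mul_smul_comm, one_mul, mul_one]
    module
  have hne (i : ι) (hij : i ≠ j) : α i * e i * (α j + e j) = (α j + e j) * (α i * e i) := by
    have hα_anti : α i * (α j + e j) = -((α j + e j) * α i) := by
      rw [mul_add, hα.anticomm hij, h.anticomm, add_mul, neg_add]
    have he_anti : e i * (α j + e j) = -((α j + e j) * e i) := by
      rw [mul_add, h.isCliffordFamily.anticomm hij, h.mul_anticomm, add_mul, neg_add]
    rw [mul_assoc, he_anti, mul_neg, ← mul_assoc, hα_anti, neg_mul, neg_neg, mul_assoc]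
  have hsum : (∑ i, α i * e i) * (α j + e j) =
      (α j + e j) * (∑ i, α i * e i) - (2 * η) • (α j + e j) := by
    rw [Finset.sum_mul, Finset.mul_sum, ← Finset.add_sum_erase _ _ (Finset.mem_univ j),
      ← Finset.add_sum_erase _ _ (Finset.mem_univ j), hself,
      Finset.sum_congr rfl fun i hi => hne i (Finset.ne_of_mem_erase hi)]
    abel
  rw [h.fermionNumber_eq hη hα, sub_mul, smul_mul_assoc, one_mul, smul_mul_assoc, hsum, mul_add,
    mul_sub, mul_smul_comm, mul_smul_comm, mul_smul_comm, mul_one]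
  linear_combination (norm := module) (4 : ℝ) • congrArg (· • (α j + e j)) hη

theorem add_mulVec_mem_range_fermionNumber (hη : η * η = 1) (h : IsDiracSymbol η α e)
    (hα : IsCliffordFamily η α) (j : ι) (w : κ → ℝ) :
    (α j + e j) *ᵥ w ∈ LinearMap.range (fermionNumber α e).mulVecLin := by
  obtain ⟨v, rfl⟩ := mulVec_surjective_iff_isUnit.2
    (isUnit_smul_one_add_fermionNumber α e (zero_lt_four (α := ℝ))) w
  exact ⟨(α j + e j) *ᵥ v, by
    rw [mulVecLin_apply, mulVec_mulVec, mulVec_mulVec, h.fermionNumber_mul_add hη hα]⟩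

theorem two_pow_mul_finrank_ker_fermionNumber (hη : η * η = 1) (h : IsDiracSymbol η α e)
    (hα : IsCliffordFamily η α) :
    2 ^ Fintype.card ι * Module.finrank ℝ (LinearMap.ker (fermionNumber α e).mulVecLin) =
      Fintype.card κ := by
  have hη0 : 4 * η ≠ 0 := by
    rintro h0
    rw [(mul_eq_zero.1 h0).resolve_left four_ne_zero, mul_zero] at hη
    exact zero_ne_one hη
  have hker : LinearMap.ker (fermionNumber α e).mulVecLin =
      ⨅ i ∈ Finset.univ, LinearMap.ker (toLinAlgEquiv' (α i - e i)) := by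
    ext w
    simp [mulVec_fermionNumber_eq_zero, sub_mulVec]
  rw [hker, ← Finset.card_univ (α := ι), ← Module.finrank_fintype_fun_eq_card ℝ (η := κ)]
  refine two_pow_mul_finrank_iInf_ker (f := fun i => toLinAlgEquiv' (α i - e i))
    (g := fun i => toLinAlgEquiv' (α i + e i)) hη0 (fun i => ?_) (fun i j hij => ?_) (fun i => ?_)
    (fun i j hij => ?_) Finset.univ
  · rw [← map_mul, h.sub_mul_sub_self hα, map_zero]
  · beta_reduce
    rw [← map_mul, ← map_mul, h.sub_mul_sub_anticomm hα hij, map_neg]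
  · rw [← map_mul, ← map_mul, ← map_add, h.add_mul_sub_add_sub_mul_add hα, map_smul, map_one]
  · beta_reduce
    rw [← map_mul, ← map_mul, h.sub_mul_add_anticomm hα hij, map_neg]

theorem bijective_mulVec_add_fermionNumber (α e : ι → Matrix κ κ ℝ) {a : ι → ℕ} (ha : a ≠ 0) :
    Function.Bijective (((4 * ∑ i, (a i : ℝ)) • 1 + fermionNumber α e) *ᵥ ·) := by
  have hpos : 0 < 4 * ∑ i, (a i : ℝ) := by
    obtain ⟨i, hi⟩ := Function.ne_iff.1 ha
    exact mul_pos four_pos (Finset.sum_pos' (fun _ _ => Nat.cast_nonneg _)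
      ⟨i, Finset.mem_univ i, Nat.cast_pos.2 (Nat.pos_of_ne_zero hi)⟩)
  have hunit := isUnit_smul_one_add_fermionNumber α e hpos
  exact ⟨mulVec_injective_iff_isUnit.2 hunit, mulVec_surjective_iff_isUnit.2 hunit⟩

variable [DecidableEq ι]

theorem dirac_dirac_apply (hη : η * η = 1) (h : IsDiracSymbol η α e) (hα : IsCliffordFamily η α)
    (u : HermiteSeq ι κ) (a : ι → ℕ) :
    dirac α e (dirac α e u) a =
      η • (((4 * ∑ i, (a i : ℝ)) • 1 + fermionNumber α e) *ᵥ u a) := by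
  have hpotential : potential α * potential α = η • ∑ i, position i * position i := by
    rw [potential, sum_mul_mul_sum_mul_of_anticomm (fun i j hij => ?_) commute_position
      fun i j => commute_coeffAction_position _ j, Finset.smul_sum]
    · simp only [← map_mul, (hα.isCliffordUnit _).mul_self, map_smul, map_one, smul_mul_assoc,
        one_mul]
    · beta_reduce
      rw [← map_mul, ← map_mul, hα.anticomm hij, map_neg]
  have hsq : dirac α e * dirac α e =
      η • oscillator - (2 : ℝ) • coeffAction (∑ i, α i * e i) := by
    rw [h.dirac_mul_self, hpotential, oscillator, Finset.sum_sub_distrib]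
    module
  rw [← Module.End.mul_apply, hsq, h.fermionNumber_eq hη hα]
  simp only [LinearMap.sub_apply, LinearMap.smul_apply, Pi.sub_apply, Pi.smul_apply,
    oscillator_apply, coeffAction_apply, add_mulVec, sub_mulVec, smul_mulVec, one_mulVec]
  linear_combination (norm := module) (2 : ℝ) • congrArg (· • ((∑ i, α i * e i) *ᵥ u a)) hη

theorem dirac_apply_zero_mem_range (hη : η * η = 1) (h : IsDiracSymbol η α e)
    (hα : IsCliffordFamily η α) (u : HermiteSeq ι κ) :
    dirac α e u 0 ∈ LinearMap.range (fermionNumber α e).mulVecLin := by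
  rw [dirac_apply]
  refine sum_mem fun i _ => ?_
  convert h.add_mulVec_mem_range_fermionNumber hη hα i (lowering i u 0) using 1
  simp [position, momentum, raising_apply, add_mulVec]

/-- The restriction of `D y` to the even multi-indices of degree at most `d`. -/
noncomputable def diracLow (α e : ι → Matrix κ κ ℝ) (d : ℕ) :
    truncatedKernel α e d →ₗ[ℝ] (evenIndicesUpTo ι d → κ → ℝ) :=
  LinearMap.funLeft ℝ (κ → ℝ) Subtype.val ∘ₗ dirac α e ∘ₗ Submodule.subtype _

theorem diracLow_injective (hη : η * η = 1) (h : IsDiracSymbol η α e) (hα : IsCliffordFamily η α)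
    (d : ℕ) : Function.Injective (diracLow α e d) := by
  refine (injective_iff_map_eq_zero _).2 fun y hy => ?_
  have hη0 : η ≠ 0 := fun h0 => by simp [h0] at hη
  have hdirac : dirac α e y = 0 := by
    funext a
    by_cases ha : a ∈ evenIndices ι
    · rcases le_or_gt (∑ i, a i) d with hle | hlt
      · exact congrFun hy ⟨a, ha, hle⟩
      · exact y.2.2.2 a ⟨ha, hlt⟩
    · exact dirac_apply_eq_zero_of_notMem_evenIndices y.2.2.1 ha
  refine Subtype.ext (funext fun a => ?_)
  rcases eq_or_ne a 0 with rfl | ha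
  · exact y.2.2.1 0 (by simp [evenIndices])
  have hsq := h.dirac_dirac_apply hη hα y a
  rw [hdirac, map_zero] at hsq
  refine (bijective_mulVec_add_fermionNumber α e ha).1 ?_
  beta_reduce
  rw [(smul_eq_zero.1 hsq.symm).resolve_left hη0]
  exact (mulVec_zero _).symm

theorem finite_truncatedKernel (hη : η * η = 1) (h : IsDiracSymbol η α e)
    (hα : IsCliffordFamily η α) (d : ℕ) : Module.Finite ℝ (truncatedKernel α e d) :=
  have : Finite (evenIndicesUpTo ι d) := finite_evenIndicesUpTo ι d
  Module.Finite.of_injective _ (h.diracLow_injective hη hα d)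

theorem range_diracLow (hη : η * η = 1) (h : IsDiracSymbol η α e) (hα : IsCliffordFamily η α)
    (d : ℕ) : LinearMap.range (diracLow α e d) =
      (LinearMap.range (fermionNumber α e).mulVecLin).comap
        (LinearMap.proj ⟨0, zero_mem_evenIndicesUpTo ι d⟩) := by
  refine le_antisymm ?_ fun z hz => ?_
  · rintro _ ⟨y, rfl⟩
    exact h.dirac_apply_zero_mem_range hη hα y
  have hsolve (a : evenIndicesUpTo ι d) :
      ∃ w, ((4 * ∑ i, (a.1 i : ℝ)) • 1 + fermionNumber α e) *ᵥ w = z a := by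
    obtain ⟨a, ha⟩ := a
    rcases eq_or_ne a 0 with rfl | ha0
    · obtain ⟨w, hw⟩ := hz
      exact ⟨w, by simpa using hw⟩
    · exact (bijective_mulVec_add_fermionNumber α e ha0).2 (z ⟨a, ha⟩)
  classical
  choose w hw using hsolve
  let u : HermiteSeq ι κ := fun a => if ha : a ∈ evenIndicesUpTo ι d then w ⟨a, ha⟩ else 0
  have hu_mem (a : evenIndicesUpTo ι d) : u a = w a := dif_pos a.2
  have hu_notMem (a : ι → ℕ) (ha : a ∉ evenIndicesUpTo ι d) : u a = 0 := dif_neg ha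
  have hu_finite : u ∈ finiteSeq ι κ :=
    (finite_evenIndicesUpTo ι d).subset fun a => not_imp_comm.1 (hu_notMem a)
  have hdirac (a : ι → ℕ) : dirac α e (η • dirac α e u) a =
      ((4 * ∑ i, (a i : ℝ)) • 1 + fermionNumber α e) *ᵥ u a := by
    rw [map_smul, Pi.smul_apply, h.dirac_dirac_apply hη hα, smul_smul, hη, one_smul]
  have hmem : η • dirac α e u ∈ truncatedKernel α e d := by
    refine ⟨mem_range_ofHermiteL2.2 (summable_dotProduct (Submodule.smul_mem _ η
      (h.isFormalAdjoint_dirac.map_mem u hu_finite))), fun a ha => ?_, fun a ha => ?_⟩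
    · rw [Pi.smul_apply, dirac_apply_eq_zero_of_mem_evenIndices
        (fun b hb => hu_notMem b fun hb' => hb hb'.1) ha, smul_zero]
    · rw [hdirac, hu_notMem a fun ha' => ha'.2.not_gt ha.2, mulVec_zero]
  refine ⟨⟨_, hmem⟩, funext fun a => ?_⟩
  rw [← hw, ← hu_mem]
  exact hdirac a

theorem finrank_truncatedKernel_add (hη : η * η = 1) (h : IsDiracSymbol η α e)
    (hα : IsCliffordFamily η α) (d : ℕ) :
    Module.finrank ℝ (truncatedKernel α e d) +
      Module.finrank ℝ (LinearMap.ker (fermionNumber α e).mulVecLin) =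
        (evenIndicesUpTo ι d).ncard * Fintype.card κ := by
  have : Finite (evenIndicesUpTo ι d) := finite_evenIndicesUpTo ι d
  have : Fintype (evenIndicesUpTo ι d) := Fintype.ofFinite _
  let ev : (evenIndicesUpTo ι d → κ → ℝ) →ₗ[ℝ]
      (κ → ℝ) ⧸ LinearMap.range (fermionNumber α e).mulVecLin :=
    (LinearMap.range (fermionNumber α e).mulVecLin).mkQ ∘ₗ
      LinearMap.proj ⟨0, zero_mem_evenIndicesUpTo ι d⟩
  have hker : LinearMap.ker ev = LinearMap.range (diracLow α e d) := by
    rw [h.range_diracLow hη hα, LinearMap.ker_comp, Submodule.ker_mkQ]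
  have hsurj : LinearMap.range ev = ⊤ := by
    rw [LinearMap.range_eq_top]
    exact (Submodule.mkQ_surjective _).comp (LinearMap.proj_surjective _)
  have hcoker := (LinearMap.range (fermionNumber α e).mulVecLin).finrank_quotient_add_finrank
  have hnullity := (fermionNumber α e).mulVecLin.finrank_range_add_finrank_ker
  have hev := ev.finrank_range_add_finrank_ker
  rw [hsurj, finrank_top, hker, LinearMap.finrank_range_of_inj (h.diracLow_injective hη hα d),
    Module.finrank_pi_fintype, Finset.sum_const, Finset.card_univ, smul_eq_mul,
    Module.finrank_fintype_fun_eq_card, ← Nat.card_eq_fintype_card] at hev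
  rw [← Nat.card_coe_set_eq, ← hev]
  omega

end IsDiracSymbol

end CliffordPotential

section EllipticPencils

open scoped Kronecker

variable {ι κ κ' : Type*} [Fintype ι] [Fintype κ] {c c' : ℝ} {α α' : ι → Matrix κ κ ℝ}

theorem IsEllipticPencil.mono (h : IsEllipticPencil c α) (hc : c' ≤ c) :
    IsEllipticPencil c' α := fun v w =>
  (mul_le_mul_of_nonneg_right (mul_le_mul_of_nonneg_right hc
    (Finset.sum_nonneg fun _ _ => sq_nonneg _)) (dotProduct_self_nonneg w)).trans (h v w)

theorem mulVec_dotProduct_mulVec (M : Matrix κ κ ℝ) (w : κ → ℝ) :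
    (M *ᵥ w) ⬝ᵥ (M *ᵥ w) = w ⬝ᵥ ((Mᵀ * M) *ᵥ w) := by
  rw [← mulVec_mulVec, dotProduct_mulVec w, vecMul_transpose]

theorem transpose_linearCombination_mul_add {β γ : ι → Matrix κ κ ℝ}
    (h : ∀ i j, (β i)ᵀ * γ j + (γ j)ᵀ * β i = 0) (v : ι → ℝ) :
    (∑ i, v i • β i)ᵀ * (∑ i, v i • γ i) + (∑ i, v i • γ i)ᵀ * (∑ i, v i • β i) = 0 := by
  rw [transpose_sum, transpose_sum, Finset.sum_mul_sum, Finset.sum_mul_sum, Finset.sum_comm,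
    ← Finset.sum_add_distrib]
  refine Finset.sum_eq_zero fun j _ => ?_
  rw [← Finset.sum_add_distrib]
  refine Finset.sum_eq_zero fun i _ => ?_
  rw [transpose_smul, transpose_smul, smul_mul_smul_comm, smul_mul_smul_comm, mul_comm (v j),
    ← smul_add, h, smul_zero]

theorem IsEllipticPencil.lineMap (h : IsEllipticPencil c α) (h' : IsEllipticPencil c α')
    (hc : 0 ≤ c) (horth : ∀ i j, (α i)ᵀ * α' j + (α' j)ᵀ * α i = 0) (t : ℝ) :
    IsEllipticPencil (c / 2) (AffineMap.lineMap α α' t) := by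
  intro v w
  set F := ∑ i, v i • α i
  set G := ∑ i, v i • α' i
  have hsum : ∑ i, v i • AffineMap.lineMap α α' t i = (1 - t) • F + t • G := by
    simp only [AffineMap.lineMap_apply_module, Pi.add_apply, Pi.smul_apply, smul_add,
      Finset.sum_add_distrib, F, G, Finset.smul_sum, smul_comm (v _)]
  have hcross : (F *ᵥ w) ⬝ᵥ (G *ᵥ w) = 0 := by
    have hFG : w ⬝ᵥ ((Fᵀ * G + Gᵀ * F) *ᵥ w) = 0 := by
      rw [transpose_linearCombination_mul_add horth, zero_mulVec, dotProduct_zero]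
    rw [add_mulVec, dotProduct_add, ← mulVec_mulVec, ← mulVec_mulVec, dotProduct_mulVec w,
      dotProduct_mulVec w, vecMul_transpose, vecMul_transpose, dotProduct_comm (G *ᵥ w)] at hFG
    linarith
  have hF := mul_le_mul_of_nonneg_left (h v w) (sq_nonneg (1 - t))
  have hG := mul_le_mul_of_nonneg_left (h' v w) (sq_nonneg t)
  have hconvex : c * (∑ i, v i ^ 2) * (w ⬝ᵥ w) * 2⁻¹ ≤
      c * (∑ i, v i ^ 2) * (w ⬝ᵥ w) * ((1 - t) ^ 2 + t ^ 2) := by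
    refine mul_le_mul_of_nonneg_left ?_ (mul_nonneg (mul_nonneg hc
      (Finset.sum_nonneg fun _ _ => sq_nonneg _)) (dotProduct_self_nonneg w))
    linarith [sq_nonneg (1 - 2 * t)]
  simp only [hsum, add_mulVec, smul_mulVec, add_dotProduct, dotProduct_add, smul_dotProduct,
    dotProduct_smul, smul_eq_mul, hcross, dotProduct_comm (G *ᵥ w) (F *ᵥ w)]
  linarith

theorem isEllipticPencil_iff_posSemidef [DecidableEq κ] : IsEllipticPencil c α ↔ ∀ v : ι → ℝ,
    ((∑ i, v i • α i)ᵀ * (∑ i, v i • α i) - (c * ∑ i, v i ^ 2) • 1).PosSemidef := by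
  refine forall_congr' fun v => ?_
  rw [posSemidef_iff_dotProduct_mulVec]
  have hherm : ((∑ i, v i • α i)ᵀ * (∑ i, v i • α i) - (c * ∑ i, v i ^ 2) • 1).IsHermitian :=
    (isHermitian_conjTranspose_mul_self _).sub (isHermitian_one.smul (IsSelfAdjoint.all _))
  rw [and_iff_right hherm]
  refine forall_congr' fun w => ?_
  rw [star_trivial, sub_mulVec, dotProduct_sub, sub_nonneg, smul_mulVec, one_mulVec,
    dotProduct_smul, smul_eq_mul, mulVec_dotProduct_mulVec]

theorem IsEllipticPencil.kronecker [Fintype κ'] [DecidableEq κ']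
    (h : IsEllipticPencil c α) {B : Matrix κ' κ' ℝ} (hB : Bᵀ * B = 1) :
    IsEllipticPencil c fun i => α i ⊗ₖ B := by
  classical
  rw [isEllipticPencil_iff_posSemidef] at h ⊢
  intro v
  have hsum : ∑ i, v i • α i ⊗ₖ B = (∑ i, v i • α i) ⊗ₖ B := by
    ext; simp [Matrix.sum_apply, Finset.sum_mul, mul_assoc]
  have hkron : (∑ i, v i • α i ⊗ₖ B)ᵀ * (∑ i, v i • α i ⊗ₖ B) - (c * ∑ i, v i ^ 2) • 1 =
      ((∑ i, v i • α i)ᵀ * (∑ i, v i • α i) - (c * ∑ i, v i ^ 2) • 1) ⊗ₖ (1 : Matrix κ' κ' ℝ) := by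
    rw [hsum, ← kroneckerMap_transpose, ← mul_kronecker_mul, hB, ← one_kronecker_one,
      ← smul_kronecker]
    ext
    simp [sub_mul]
  exact hkron ▸ (h v).kronecker .one

variable [DecidableEq κ]

theorem IsCliffordFamily.sum_smul_mul_sum_smul {s : ℝ} (hα : IsCliffordFamily s α) (v : ι → ℝ) :
    (∑ i, v i • α i) * (∑ i, v i • α i) = (s * ∑ i, v i ^ 2) • 1 := by
  have hsq := sum_mul_mul_sum_mul_of_anticomm (P := fun i => algebraMap ℝ (Matrix κ κ ℝ) (v i))
    hα.anticomm (fun _ _ => Algebra.commutes _ _) (fun _ _ => (Algebra.commutes _ _).symm)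
  simp only [← Algebra.commutes, ← Algebra.smul_def, ← map_mul,
    (hα.isCliffordUnit _).mul_self] at hsq
  rw [hsq, Finset.mul_sum, Finset.sum_smul]
  exact Finset.sum_congr rfl fun i _ => by rw [smul_smul, sq, mul_comm]

theorem IsCliffordFamily.transpose_sum_smul {s : ℝ} (hα : IsCliffordFamily s α) (v : ι → ℝ) :
    (∑ i, v i • α i)ᵀ = s • ∑ i, v i • α i := by
  simp only [transpose_sum, transpose_smul, (hα.isCliffordUnit _).transpose_eq, Finset.smul_sum,
    smul_comm s]

theorem IsCliffordFamily.isEllipticPencil_one {s : ℝ} (hα : IsCliffordFamily s α) (hs : s * s = 1) :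
    IsEllipticPencil 1 α := by
  intro v w
  rw [mulVec_dotProduct_mulVec, hα.transpose_sum_smul, smul_mul_assoc, hα.sum_smul_mul_sum_smul,
    smul_smul, ← mul_assoc, hs, smul_mulVec, one_mulVec, dotProduct_smul, smul_eq_mul]

end EllipticPencils

section TruncatedKernelSymmetries

open scoped Kronecker

variable {ι κ κ' : Type*} [Fintype κ]

theorem kronecker_diagonal_mulVec_apply [Fintype κ'] [DecidableEq κ'] (B : Matrix κ κ ℝ)
    (p : κ' → ℝ) (w : κ × κ' → ℝ) (k : κ) (j : κ') :
    ((B ⊗ₖ diagonal p) *ᵥ w) (k, j) = ((p j • B) *ᵥ fun k => w (k, j)) k := by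
  simp [mulVec, dotProduct, Fintype.sum_prod_type, diagonal_apply, mul_comm (p j)]

variable [DecidableEq κ]

theorem coeffAction_mem_range_ofHermiteL2 (B : Matrix κ κ ℝ) {y : HermiteSeq ι κ}
    (hy : y ∈ LinearMap.range (ofHermiteL2 ι κ)) :
    coeffAction B y ∈ LinearMap.range (ofHermiteL2 ι κ) := by
  rw [mem_range_ofHermiteL2] at hy ⊢
  obtain ⟨C, hC⟩ := exists_mulVec_dotProduct_mulVec_le B
  exact .of_nonneg_of_le (fun _ => dotProduct_self_nonneg _) (fun a => hC.2 (y a)) (hy.mul_left C)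

variable [Fintype ι] [DecidableEq ι]
  {α α' e e' : ι → Matrix κ κ ℝ} {B I J : Matrix κ κ ℝ} {d : ℕ} {s : ℝ}

theorem dirac_coeffAction (hα : ∀ i, α' i * B = s • (B * α i))
    (he : ∀ i, e' i * B = s • (B * e i)) (y : HermiteSeq ι κ) :
    dirac α' e' (coeffAction B y) = s • coeffAction B (dirac α e y) := by
  have hposition (i : ι) (a : ι → ℕ) : position i (coeffAction B y) a = B *ᵥ position i y a :=
    congrFun (LinearMap.congr_fun (commute_coeffAction_position B i).symm.eq y) a
  have hmomentum (i : ι) (a : ι → ℕ) : momentum i (coeffAction B y) a = B *ᵥ momentum i y a :=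
    congrFun (LinearMap.congr_fun (commute_coeffAction_momentum B i).symm.eq y) a
  funext a
  simp only [Pi.smul_apply, coeffAction_apply, dirac_apply, hposition, hmomentum, mulVec_mulVec, hα,
    he, smul_mulVec, mulVec_sum, mulVec_add, Finset.smul_sum, smul_add]

theorem coeffAction_mem_truncatedKernel (hα : ∀ i, α' i * B = s • (B * α i))
    (he : ∀ i, e' i * B = s • (B * e i)) {y : HermiteSeq ι κ} (hy : y ∈ truncatedKernel α e d) :
    coeffAction B y ∈ truncatedKernel α' e' d := by
  refine ⟨coeffAction_mem_range_ofHermiteL2 B hy.1, fun a ha => ?_, fun a ha => ?_⟩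
  · rw [coeffAction_apply, hy.2.1 a ha, mulVec_zero]
  · rw [dirac_coeffAction hα he, Pi.smul_apply, coeffAction_apply, hy.2.2 a ha, mulVec_zero,
      smul_zero]

theorem nonempty_truncatedKernel_neg_equiv {ε : Matrix κ κ ℝ} (hε : IsCliffordUnit s ε)
    (hs : s * s = 1) (hα : ∀ i, Commute (α i) ε) (he : ∀ i, e i * ε = -(ε * e i)) (d : ℕ) :
    Nonempty (truncatedKernel (-α) e d ≃ₗ[ℝ] truncatedKernel α e d) := by
  have hinv (y : HermiteSeq ι κ) : coeffAction ε (coeffAction (s • ε) y) = y := by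
    rw [← Module.End.mul_apply, ← map_mul, mul_smul_comm, hε.mul_self, smul_smul, hs, one_smul,
      map_one, Module.End.one_apply]
  have hinv' (y : HermiteSeq ι κ) : coeffAction (s • ε) (coeffAction ε y) = y := by
    rw [← Module.End.mul_apply, ← map_mul, smul_mul_assoc, hε.mul_self, smul_smul, hs, one_smul,
      map_one, Module.End.one_apply]
  exact ⟨.ofLinearMap
    ((coeffAction ε).restrict fun y hy => coeffAction_mem_truncatedKernel (s := -1)
      (fun i => by simp [(hα i).eq]) (fun i => by simp [he]) hy)
    ((coeffAction (s • ε)).restrict fun y hy => coeffAction_mem_truncatedKernel (s := -1)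
      (fun i => by simp [(hα i).eq]) (fun i => by simp [he]) hy)
    (LinearMap.ext fun y => Subtype.ext (hinv y)) (LinearMap.ext fun y => Subtype.ext (hinv' y))⟩

theorem four_dvd_finrank_truncatedKernel [Module.Finite ℝ (truncatedKernel α e d)]
    (hI : I * I = -1) (hJ : J * J = -1) (hIJ : I * J = -(J * I)) (hαI : ∀ i, Commute (α i) I)
    (hαJ : ∀ i, Commute (α i) J) (heI : ∀ i, Commute (e i) I) (heJ : ∀ i, Commute (e i) J) :
    4 ∣ Module.finrank ℝ (truncatedKernel α e d) := by
  have hmem {B : Matrix κ κ ℝ} (hαB : ∀ i, Commute (α i) B) (heB : ∀ i, Commute (e i) B) :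
      ∀ y ∈ truncatedKernel α e d, coeffAction B y ∈ truncatedKernel α e d := fun _ =>
    coeffAction_mem_truncatedKernel (s := 1) (fun i => by rw [(hαB i).eq, one_smul])
      (fun i => by rw [(heB i).eq, one_smul])
  refine four_dvd_finrank_of_quaternion (I := (coeffAction I).restrict (hmem hαI heI))
    (J := (coeffAction J).restrict (hmem hαJ heJ)) ?_ ?_ ?_ <;>
  refine LinearMap.ext fun y => Subtype.ext (funext fun a => ?_)
  · exact (mulVec_mulVec _ _ _).trans (by rw [hI, neg_mulVec, one_mulVec]; rfl)
  · exact (mulVec_mulVec _ _ _).trans (by rw [hJ, neg_mulVec, one_mulVec]; rfl)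
  · exact (mulVec_mulVec _ _ _).trans (by rw [hIJ, neg_mulVec, ← mulVec_mulVec]; rfl)

/-- The component with second coefficient index `j`. -/
def slice (ι κ : Type*) {κ' : Type*} (j : κ') : HermiteSeq ι (κ × κ') →ₗ[ℝ] HermiteSeq ι κ where
  toFun y a k := y a (k, j)
  map_add' _ _ := rfl
  map_smul' _ _ := rfl

variable [Fintype κ'] [DecidableEq κ']

theorem slice_dirac (α e : ι → Matrix κ κ ℝ) (p : κ' → ℝ) (j : κ') (y : HermiteSeq ι (κ × κ')) :
    slice ι κ j (dirac (fun i => α i ⊗ₖ diagonal p) (fun i => e i ⊗ₖ 1) y) =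
      dirac (p j • α) e (slice ι κ j y) := by
  funext a k
  change dirac _ _ y a (k, j) = _
  simp only [dirac_apply, ← diagonal_one, Finset.sum_apply, Pi.add_apply,
    kronecker_diagonal_mulVec_apply, one_smul]
  rfl

theorem mem_truncatedKernel_kronecker_diagonal {p : κ' → ℝ} {y : HermiteSeq ι (κ × κ')} :
    y ∈ truncatedKernel (fun i => α i ⊗ₖ diagonal p) (fun i => e i ⊗ₖ 1) d ↔
      ∀ j, slice ι κ j y ∈ truncatedKernel (p j • α) e d := by
  have heq_zero (z : HermiteSeq ι (κ × κ')) (a : ι → ℕ) : z a = 0 ↔ ∀ j, slice ι κ j z a = 0 :=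
    ⟨fun h j => funext fun k => congrFun h (k, j), fun h => funext fun k => congrFun (h k.2) k.1⟩
  have hdot (a : ι → ℕ) : y a ⬝ᵥ y a = ∑ j, slice ι κ j y a ⬝ᵥ slice ι κ j y a :=
    Fintype.sum_prod_type_right _
  have hsummable : (Summable fun a => y a ⬝ᵥ y a) ↔
      ∀ j, Summable fun a => slice ι κ j y a ⬝ᵥ slice ι κ j y a := by
    simp only [hdot]
    refine ⟨fun h j => .of_nonneg_of_le (fun a => dotProduct_self_nonneg _) (fun a => ?_) h,
      fun h => summable_sum fun j _ => h j⟩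
    exact Finset.single_le_sum (f := fun j => slice ι κ j y a ⬝ᵥ slice ι κ j y a)
      (fun j _ => dotProduct_self_nonneg _) (Finset.mem_univ j)
  simp only [mem_truncatedKernel, mem_range_ofHermiteL2, hsummable, heq_zero, slice_dirac]
  exact ⟨fun h j => ⟨h.1 j, fun a ha => h.2.1 a ha j, fun a ha => h.2.2 a ha j⟩,
    fun h => ⟨fun j => (h j).1, fun a ha j => (h j).2.1 a ha, fun a ha j => (h j).2.2 a ha⟩⟩

/-- The decomposition of the truncated kernel of a direct sum of Dirac operators. -/
def truncatedKernelKroneckerEquiv (α e : ι → Matrix κ κ ℝ) (p : κ' → ℝ) (d : ℕ) :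
    truncatedKernel (fun i => α i ⊗ₖ diagonal p) (fun i => e i ⊗ₖ 1) d ≃ₗ[ℝ]
      ((j : κ') → truncatedKernel (p j • α) e d) where
  toFun y j := ⟨slice ι κ j y, mem_truncatedKernel_kronecker_diagonal.1 y.2 j⟩
  map_add' _ _ := rfl
  map_smul' _ _ := rfl
  invFun z := ⟨fun a k => (z k.2 : HermiteSeq ι κ) a k.1,
    mem_truncatedKernel_kronecker_diagonal.2 fun j => (z j).2⟩
  left_inv _ := rfl
  right_inv _ := rfl

theorem nonempty_truncatedKernel_kronecker_equiv {ε : Matrix κ κ ℝ} (hε : IsCliffordUnit s ε)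
    (hs : s * s = 1) (hα : ∀ i, Commute (α i) ε) (he : ∀ i, e i * ε = -(ε * e i)) {p : κ' → ℝ}
    (hp : ∀ j, p j = 1 ∨ p j = -1) (d : ℕ) :
    Nonempty (truncatedKernel (fun i => α i ⊗ₖ diagonal p) (fun i => e i ⊗ₖ 1) d ≃ₗ[ℝ]
      (κ' → truncatedKernel α e d)) := by
  have hslot (j : κ') : Nonempty (truncatedKernel (p j • α) e d ≃ₗ[ℝ] truncatedKernel α e d) := by
    rcases hp j with h | h <;> rw [h]
    · rw [one_smul]
      exact ⟨.refl ℝ _⟩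
    · rw [neg_one_smul]
      exact nonempty_truncatedKernel_neg_equiv hε hs hα he d
  exact ⟨(truncatedKernelKroneckerEquiv α e p d).trans
    (.piCongrRight fun j => (hslot j).some)⟩

end TruncatedKernelSymmetries

/-! ### The index formula -/

section IndexFormula

open scoped Kronecker

theorem isCliffordUnit_diagonal {κ : Type*} [Fintype κ] [DecidableEq κ] {p : κ → ℝ}
    (hp : ∀ j, p j = 1 ∨ p j = -1) : IsCliffordUnit 1 (diagonal p) where
  transpose_eq := by rw [diagonal_transpose, one_smul]
  mul_self := by
    rw [diagonal_mul_diagonal, one_smul, diagonal_eq_one]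
    exact funext fun j => by rcases hp j with h | h <;> simp [h]

theorem exists_isCliffordFamily_anticomm_diagonal (ι : Type*) [Finite ι] :
    ∃ (m : ℕ) (g : ι → Matrix (Fin (2 ^ m) × Fin 2) (Fin (2 ^ m) × Fin 2) ℝ)
      (p : Fin (2 ^ m) × Fin 2 → ℝ), IsCliffordFamily 1 g ∧ (∀ j, p j = 1 ∨ p j = -1) ∧
        ∀ i, diagonal p * g i = -(g i * diagonal p) := by
  have := Fintype.ofFinite ι
  have hmodule := (hasCliffordModule_one_one_one.add_eight_mul (.inl rfl) (Fintype.card ι)).mono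
    (n' := Fintype.card ι) (by omega) le_rfl
  rw [one_mul] at hmodule
  obtain ⟨E, -, hE, -, -⟩ := hmodule
  have hp (j : Fin 2) : ![(1 : ℝ), -1] j = 1 ∨ ![(1 : ℝ), -1] j = -1 := by
    fin_cases j <;> simp
  have hdiag : diagonal (fun j : Fin (2 ^ (4 * Fintype.card ι)) × Fin 2 => ![(1 : ℝ), -1] j.2) =
      1 ⊗ₖ pauliZ := by
    rw [show pauliZ = diagonal ![1, -1] by
      ext i j; fin_cases i <;> fin_cases j <;> simp [pauliZ]]
    rw [← diagonal_one, diagonal_kronecker_diagonal]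
    simp only [one_mul]
  refine ⟨_, fun i => E (Fintype.equivFin ι i) ⊗ₖ pauliX, fun j => ![1, -1] j.2, ?_,
    fun j => hp j.2, fun i => ?_⟩
  · simpa using (hE.comp (Fintype.equivFin ι).injective).kronecker_right isCliffordUnit_pauliX
  · rw [hdiag]
    exact kronecker_mul_kronecker_anticomm_right (.one_left _)
      (neg_eq_iff_eq_neg.1 pauliX_mul_pauliZ.symm)

namespace IsDiracSymbol

variable {ι κ κ' : Type*} [Fintype κ] [DecidableEq κ] [Fintype κ'] [DecidableEq κ'] {η : ℝ}
  {α e : ι → Matrix κ κ ℝ} {ε : Matrix κ κ ℝ} {P : Matrix κ' κ' ℝ} {g : ι → Matrix κ' κ' ℝ}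

theorem kronecker (h : IsDiracSymbol η α e) (hP : IsCliffordUnit 1 P) :
    IsDiracSymbol η (fun i => α i ⊗ₖ P) fun i => e i ⊗ₖ (1 : Matrix κ' κ' ℝ) where
  transpose_eq i := by
    rw [← kroneckerMap_transpose, h.transpose_eq, hP.transpose_eq, one_smul, smul_kronecker]
  isCliffordFamily := by simpa using h.isCliffordFamily.kronecker_right (κ' := κ') .one
  anticomm i j := kronecker_mul_kronecker_anticomm_left (h.anticomm i j) (.one_right P)

theorem const_kronecker (he : IsCliffordFamily (-η) e) (hε : IsCliffordUnit η ε)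
    (heε : ∀ i, e i * ε = -(ε * e i)) (hg : IsCliffordFamily 1 g) :
    IsDiracSymbol η (fun i => ε ⊗ₖ g i) fun i => e i ⊗ₖ (1 : Matrix κ' κ' ℝ) where
  transpose_eq i := by simpa using (hε.kronecker (hg.isCliffordUnit i)).transpose_eq
  isCliffordFamily := by simpa using he.kronecker_right (κ' := κ') .one
  anticomm i j := kronecker_mul_kronecker_anticomm_left (neg_eq_iff_eq_neg.1 (heε j).symm)
    (.one_right (g i))

variable [Fintype ι] [DecidableEq ι]

theorem exists_rank_truncatedKernel_kronecker_eq (hη : η * η = 1) (h : IsDiracSymbol η α e) {c : ℝ}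
    (hc : 0 < c) (hα : IsEllipticPencil c α) (hε : IsCliffordUnit η ε) (hαε : ∀ i, Commute (α i) ε)
    (heε : ∀ i, e i * ε = -(ε * e i)) (hP : IsCliffordUnit 1 P) (hg : IsCliffordFamily 1 g)
    (hPg : ∀ i, P * g i = -(g i * P)) :
    ∃ d, Module.rank ℝ (truncatedKernel (fun i => α i ⊗ₖ P) (fun i => e i ⊗ₖ 1) d) =
      Module.rank ℝ (truncatedKernel (fun i => ε ⊗ₖ g i) (fun i => e i ⊗ₖ 1) d) := by
  have h₀ := h.kronecker hP
  have h₁ := const_kronecker h.isCliffordFamily hε heε hg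
  have hα₀ : IsEllipticPencil (min c 1) fun i => α i ⊗ₖ P :=
    (hα.kronecker (hP.transpose_mul_self (one_mul 1))).mono (min_le_left c 1)
  have hα₁ : IsEllipticPencil (min c 1) fun i => ε ⊗ₖ g i :=
    ((hg.kronecker_left hε).isEllipticPencil_one (by rwa [mul_one])).mono (min_le_right c 1)
  have horth (i j : ι) : (α i ⊗ₖ P)ᵀ * ε ⊗ₖ g j + (ε ⊗ₖ g j)ᵀ * α i ⊗ₖ P = 0 := by
    rw [h₀.transpose_eq, h₁.transpose_eq, smul_mul_assoc, smul_mul_assoc,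
      kronecker_mul_kronecker_anticomm_right (hαε i) (hPg j), smul_neg, neg_add_cancel]
  have hmin : 0 < min c 1 := lt_min hc one_pos
  exact h₀.exists_rank_truncatedKernel_eq hη h₁ (half_pos hmin)
    ((half_le_self hmin.le).trans (min_le_right c 1))
    fun t _ => hα₀.lineMap hα₁ hmin.le horth t

theorem two_pow_mul_finrank_truncatedKernel_add (hη : η * η = 1) (h : IsDiracSymbol η α e)
    (hα : IsCliffordFamily η α) (d : ℕ) :
    2 ^ Fintype.card ι * Module.finrank ℝ (truncatedKernel α e d) + Fintype.card κ =
      2 ^ Fintype.card ι * (evenIndicesUpTo ι d).ncard * Fintype.card κ := by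
  rw [mul_assoc, ← h.finrank_truncatedKernel_add hη hα, mul_add,
    h.two_pow_mul_finrank_ker_fermionNumber hη hα]

theorem exists_two_pow_mul_finrank_truncatedKernel_add (hη : η * η = 1) (h : IsDiracSymbol η α e)
    {c : ℝ} (hc : 0 < c) (hα : IsEllipticPencil c α) (hε : IsCliffordUnit η ε)
    (hαε : ∀ i, Commute (α i) ε) (heε : ∀ i, e i * ε = -(ε * e i)) :
    ∃ d r, Module.Finite ℝ (truncatedKernel α e d) ∧
      2 ^ Fintype.card ι * Module.finrank ℝ (truncatedKernel α e d) + Fintype.card κ =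
        2 ^ Fintype.card ι * r * Fintype.card κ := by
  obtain ⟨m, g, p, hg, hp, hpg⟩ := exists_isCliffordFamily_anticomm_diagonal ι
  obtain ⟨d, hrank⟩ := h.exists_rank_truncatedKernel_kronecker_eq hη hc hα hε hαε heε
    (isCliffordUnit_diagonal hp) hg hpg
  have h₁ := const_kronecker h.isCliffordFamily hε heε hg
  have hα₁ : IsCliffordFamily η fun i => ε ⊗ₖ g i := by simpa using hg.kronecker_left hε
  obtain ⟨split⟩ := nonempty_truncatedKernel_kronecker_equiv hε hη hαε heε hp d
  have hsplit := split.rank_eq.symm.trans hrank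
  have := h₁.finite_truncatedKernel hη hα₁ d
  have hfinite : Module.Finite ℝ (Fin (2 ^ m) × Fin 2 → truncatedKernel α e d) := by
    rw [← Module.rank_lt_aleph0_iff, hsplit]
    exact Module.rank_lt_aleph0 ℝ _
  have : Module.Finite ℝ (truncatedKernel α e d) :=
    .of_surjective (LinearMap.proj (R := ℝ) (ι := Fin (2 ^ m) × Fin 2)
      (φ := fun _ => truncatedKernel α e d) 0)
      (LinearMap.proj_surjective _)
  refine ⟨d, (evenIndicesUpTo ι d).ncard, this,
    Nat.eq_of_mul_eq_mul_left (Fintype.card_pos (α := Fin (2 ^ m) × Fin 2)) ?_⟩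
  have hcount := h₁.two_pow_mul_finrank_truncatedKernel_add hη hα₁ d
  rw [Module.finrank, ← hsplit, ← Module.finrank, Module.finrank_pi_fintype, Finset.sum_const,
    Finset.card_univ, smul_eq_mul, Fintype.card_prod κ] at hcount
  linarith

end IsDiracSymbol

end IndexFormula

section CliffordPencils

open scoped Kronecker

theorem exists_pos_mul_norm_mul_norm_le {E F G : Type*}
    [NormedAddCommGroup E] [NormedSpace ℝ E] [ProperSpace E]
    [NormedAddCommGroup F] [NormedSpace ℝ F] [ProperSpace F]
    [NormedAddCommGroup G] [NormedSpace ℝ G] {f : E → F → G} (hf : Continuous (Function.uncurry f))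
    (hsmul : ∀ (a b : ℝ) v w, f (a • v) (b • w) = (a * b) • f v w)
    (hzero : ∀ v w, v ≠ 0 → w ≠ 0 → f v w ≠ 0) :
    ∃ c, 0 < c ∧ ∀ v w, c * (‖v‖ * ‖w‖) ≤ ‖f v w‖ := by
  obtain ⟨c, hc, hle⟩ := ((isCompact_sphere (0 : E) 1).prod (isCompact_sphere (0 : F) 1)
    ).exists_forall_le' hf.norm.continuousOn (a := 0) fun p hp => norm_pos_iff.2 <|
      hzero p.1 p.2 (ne_zero_of_mem_unit_sphere ⟨_, hp.1⟩) (ne_zero_of_mem_unit_sphere ⟨_, hp.2⟩)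
  refine ⟨c, hc, fun v w => ?_⟩
  rcases eq_or_ne v 0 with rfl | hv
  · simp
  rcases eq_or_ne w 0 with rfl | hw
  · simp
  have hunit := hle (‖v‖⁻¹ • v, ‖w‖⁻¹ • w)
    ⟨by simp [norm_smul, hv], by simp [norm_smul, hw]⟩
  rw [Function.uncurry_apply_pair, hsmul, norm_smul, ← mul_inv, norm_inv,
    Real.norm_of_nonneg (by positivity), inv_mul_eq_div, le_div_iff₀ (by positivity)] at hunit
  exact hunit

theorem exists_isEllipticPencil_of_isUnit {ι κ : Type*} [Fintype ι] [Fintype κ] [DecidableEq κ]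
    {α : ι → Matrix κ κ ℝ} (h : ∀ v : ι → ℝ, v ≠ 0 → IsUnit (∑ i, v i • α i)) :
    ∃ c, 0 < c ∧ IsEllipticPencil c α := by
  let f (v : EuclideanSpace ℝ ι) (w : EuclideanSpace ℝ κ) : EuclideanSpace ℝ κ :=
    WithLp.toLp 2 ((∑ i, v i • α i) *ᵥ w)
  have hsmul (a b : ℝ) v w : f (a • v) (b • w) = (a * b) • f v w := by
    simp only [f, PiLp.smul_apply, WithLp.ofLp_smul, smul_eq_mul, mul_smul, ← Finset.smul_sum,
      smul_mulVec, mulVec_smul, WithLp.toLp_smul, smul_comm b a]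
  have hzero v w (hv : v ≠ 0) (hw : w ≠ 0) : f v w ≠ 0 := by
    rw [Ne, WithLp.toLp_eq_zero, ← mulVec_zero (∑ i, v i • α i),
      (mulVec_injective_of_isUnit (h v ((WithLp.ofLp_eq_zero 2).not.2 hv))).eq_iff]
    exact (WithLp.ofLp_eq_zero 2).not.2 hw
  have hcont : Continuous (Function.uncurry f) := by
    unfold f Function.uncurry
    fun_prop
  obtain ⟨c, hc, hle⟩ := exists_pos_mul_norm_mul_norm_le hcont hsmul hzero
  refine ⟨c ^ 2, pow_pos hc 2, fun v w => ?_⟩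
  have hsq := pow_le_pow_left₀ (by positivity) (hle (WithLp.toLp 2 v) (WithLp.toLp 2 w)) 2
  simpa only [f, mul_pow, EuclideanSpace.real_norm_sq_eq, dotProduct, ← sq, ← mul_assoc] using hsq

theorem HasCliffordModule.exists_isCliffordFamily_anticomm {s : ℝ} {n c q : ℕ}
    (hs : s = 1 ∨ s = -1) (h : HasCliffordModule s n c q) :
    ∃ (e : Fin (n + 1) → Matrix (Fin c × Fin 2) (Fin c × Fin 2) ℝ)
      (ε : Matrix (Fin c × Fin 2) (Fin c × Fin 2) ℝ)
      (K : Fin q → Matrix (Fin c × Fin 2) (Fin c × Fin 2) ℝ),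
      IsCliffordFamily s e ∧ IsCliffordUnit (-s) ε ∧ (∀ i, e i * ε = -(ε * e i)) ∧
        IsCliffordFamily (-1) K ∧ (∀ i j, Commute (e i) (K j)) ∧ ∀ j, Commute ε (K j) := by
  obtain ⟨E, K, hE, hK, hEK⟩ := h
  obtain ⟨ω, ω', hω, hω', hXω, hXω', hωω'⟩ := exists_isCliffordUnit_anticomm_pauliX hs
  have he := hE.kronecker_sumElim isCliffordUnit_pauliX (by simpa using .const hω)
    fun _ : Unit => hXω
  have hK' := hK.kronecker_right (κ' := Fin 2) .one
  rw [mul_one] at he hK'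
  let ψ : Fin (n + 1) ≃ Fin n ⊕ Unit := Fintype.equivOfCardEq (by simp)
  refine ⟨_, 1 ⊗ₖ ω', _, he.comp ψ.injective, by simpa using IsCliffordUnit.one.kronecker hω',
    ψ.forall_congr_left.2 ?_, hK', ψ.forall_congr_left.2 ?_,
    fun j => commute_kronecker (.one_left _) (.one_right _)⟩ <;>
  simp only [Function.comp_apply, Equiv.apply_symm_apply, Sum.forall, Sum.elim_inl, Sum.elim_inr]
  · exact ⟨fun i => kronecker_mul_kronecker_anticomm_right (.one_right _) hXω',
      fun _ => kronecker_mul_kronecker_anticomm_right (.refl _)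
        (neg_eq_iff_eq_neg.1 hωω'.symm)⟩
  · exact ⟨fun i j => commute_kronecker (hEK i j) (.one_right _),
      fun _ j => commute_kronecker (.one_left _) (.one_right _)⟩

theorem two_pow_dvd_of_mul_add_eq {m b x r : ℕ} (hx : 4 ∣ x) (hm : m ≠ 0)
    (h : 2 ^ m * x + b = 2 ^ m * r * b) : 2 ^ (m + 2) ∣ b := by
  have hdvd : 2 ^ (m + 2) ∣ 2 ^ m * x := by
    rw [pow_add]
    exact mul_dvd_mul_left _ hx
  have hcop : IsCoprime ((2 : ℤ) ^ (m + 2)) (2 ^ m * r - 1) := by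
    refine IsCoprime.pow_left ⟨2 ^ (m - 1) * r, -1, ?_⟩
    rw [← Nat.sub_one_add_one hm, pow_succ]
    simp only [Nat.add_sub_cancel]
    ring
  zify at h hdvd ⊢
  have hfactor : (2 ^ m * r - 1) * (b : ℤ) = 2 ^ m * x := by linear_combination -h
  exact hcop.dvd_of_dvd_mul_left (hfactor ▸ hdvd)

theorem IsDiracSymbol.symmetric_kronecker {η : ℝ} {ι κ κ' : Type*} [Fintype κ] [DecidableEq κ]
    [Fintype κ'] [DecidableEq κ'] {A : ι → Matrix κ κ ℝ} {e : ι → Matrix κ' κ' ℝ}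
    {ε : Matrix κ' κ' ℝ} (hA : ∀ i, (A i)ᵀ = A i) (he : IsCliffordFamily (-η) e)
    (hε : IsCliffordUnit η ε) (heε : ∀ i, e i * ε = -(ε * e i)) :
    IsDiracSymbol η (fun i => A i ⊗ₖ ε) fun i => (1 : Matrix κ κ ℝ) ⊗ₖ e i where
  transpose_eq i := by rw [← kroneckerMap_transpose, hA, hε.transpose_eq, kronecker_smul]
  isCliffordFamily := by simpa using he.kronecker_left (κ' := κ) .one
  anticomm i j := kronecker_mul_kronecker_anticomm_right (.one_right _)
    (neg_eq_iff_eq_neg.1 (heε j).symm)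

theorem two_pow_dvd_mul_of_symmetric_isUnit {s : ℝ} {n c : ℕ} {κ : Type*} [Fintype κ]
    [DecidableEq κ] (hs : s = 1 ∨ s = -1) (h : HasCliffordModule s n c 2)
    {A : Fin (n + 1) → Matrix κ κ ℝ} (hA : ∀ i, (A i)ᵀ = A i)
    (hunit : ∀ v : Fin (n + 1) → ℝ, v ≠ 0 → IsUnit (∑ i, v i • A i)) :
    2 ^ (n + 2) ∣ Fintype.card κ * c := by
  obtain ⟨c₀, hc₀, hell⟩ := exists_isEllipticPencil_of_isUnit hunit
  obtain ⟨e, ε, K, he, hε, heε, hK, heK, hεK⟩ := h.exists_isCliffordFamily_anticomm hs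
  have hss : -s * -s = 1 := by rcases hs with rfl | rfl <;> norm_num
  have hsymbol := IsDiracSymbol.symmetric_kronecker hA (by rwa [neg_neg]) hε heε
  obtain ⟨d, r, _, hindex⟩ := hsymbol.exists_two_pow_mul_finrank_truncatedKernel_add hss hc₀
    (hell.kronecker (hε.transpose_mul_self hss)) (ε := 1 ⊗ₖ ε)
    (by simpa using IsCliffordUnit.one.kronecker hε)
    (fun i => commute_kronecker (.one_right _) (.refl _))
    fun i => kronecker_mul_kronecker_anticomm_right (.refl _) (heε i)
  have hK' : IsCliffordFamily (-1) fun j => (1 : Matrix κ κ ℝ) ⊗ₖ K j := by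
    simpa using hK.kronecker_left (κ' := κ) .one
  have hAK (j : Fin 2) (i) : Commute (A i ⊗ₖ ε) (1 ⊗ₖ K j) :=
    commute_kronecker (.one_right _) (hεK j)
  have heK' (j : Fin 2) (i) : Commute ((1 : Matrix κ κ ℝ) ⊗ₖ e i) (1 ⊗ₖ K j) :=
    commute_kronecker (.refl _) (heK i j)
  have hfour := four_dvd_finrank_truncatedKernel (d := d)
    (by simpa using (hK'.isCliffordUnit 0).mul_self)
    (by simpa using (hK'.isCliffordUnit 1).mul_self) (hK'.anticomm Fin.zero_ne_one) (hAK 0) (hAK 1)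
    (heK' 0) (heK' 1)
  rw [Fintype.card_fin] at hindex
  have hdvd := two_pow_dvd_of_mul_add_eq hfour n.succ_ne_zero hindex
  rw [Fintype.card_prod, Fintype.card_prod, Fintype.card_fin, Fintype.card_fin, ← mul_assoc,
    pow_succ] at hdvd
  exact Nat.dvd_of_mul_dvd_mul_right two_pos hdvd

end CliffordPencils

/-! ### Hurwitz–Radon numbers -/

section HurwitzRadon

theorem two_pow_dvd_mul_of_linearMap {V κ : Type*} [AddCommGroup V] [Module ℝ V] [Fintype κ]
    [DecidableEq κ] {s : ℝ} {n c : ℕ} (hs : s = 1 ∨ s = -1) (h : HasCliffordModule s n c 2)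
    (hn : n < Module.finrank ℝ V) {f : V →ₗ[ℝ] Matrix κ κ ℝ} (hsymm : ∀ v, (f v)ᵀ = f v)
    (hunit : ∀ v, v ≠ 0 → IsUnit (f v)) : 2 ^ (n + 2) ∣ Fintype.card κ * c := by
  obtain ⟨b, hb⟩ := exists_linearIndependent_of_le_finrank hn
  refine two_pow_dvd_mul_of_symmetric_isUnit hs h (A := fun i => f (b i)) (fun i => hsymm _)
    fun v hv => ?_
  have hsum : ∑ i, v i • f (b i) = f (∑ i, v i • b i) := by simp only [map_sum, map_smul]
  rw [hsum]
  exact hunit _ fun hzero => hv (funext (Fintype.linearIndependent_iff.1 hb v hzero))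

theorem exists_linearMap_sq_of_hasCliffordModule {n N : ℕ} (h : HasCliffordModule 1 n N 0) :
    ∃ f : EuclideanSpace ℝ (Fin n) →ₗ[ℝ] Matrix (Fin N) (Fin N) ℝ,
      ∀ v, (f v)ᵀ = f v ∧ f v ^ 2 = (‖v‖ ^ 2 : ℝ) • (1 : Matrix (Fin N) (Fin N) ℝ) := by
  obtain ⟨E, -, hE, -⟩ := h
  refine ⟨Fintype.linearCombination ℝ E ∘ₗ (WithLp.linearEquiv 2 ℝ (Fin n → ℝ)).toLinearMap,
    fun v => ⟨?_, ?_⟩⟩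
  · exact (hE.transpose_sum_smul v).trans (one_smul ℝ _)
  · rw [sq, EuclideanSpace.real_norm_sq_eq, ← one_mul (∑ i, v i ^ 2)]
    exact hE.sum_smul_mul_sum_smul v

theorem isUnit_of_sq_eq_smul_one {K A : Type*} [Field K] [Ring A] [Algebra K A] {a : A} {c : K}
    (hc : c ≠ 0) (h : a ^ 2 = c • (1 : A)) : IsUnit a := by
  refine (isUnit_pow_iff two_ne_zero).1 (h ▸ ?_)
  rw [← Algebra.algebraMap_eq_smul_one]
  exact (IsUnit.mk0 c hc).map _

theorem exists_symmetric_isUnit_of_exists_sq {E κ : Type*} [NormedAddCommGroup E] [Module ℝ E]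
    [Fintype κ] [DecidableEq κ] (h : ∃ f : E →ₗ[ℝ] Matrix κ κ ℝ,
      ∀ v, (f v)ᵀ = f v ∧ f v ^ 2 = (‖v‖ ^ 2 : ℝ) • (1 : Matrix κ κ ℝ)) :
    ∃ f : E →ₗ[ℝ] Matrix κ κ ℝ, (∀ v, (f v)ᵀ = f v) ∧ ∀ v, v ≠ 0 → IsUnit (f v) := by
  obtain ⟨f, hf⟩ := h
  exact ⟨f, fun v => (hf v).1, fun v hv =>
    isUnit_of_sq_eq_smul_one (pow_ne_zero 2 (norm_ne_zero_iff.2 hv)) (hf v).2⟩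

/-- The largest number of anticommuting orthogonal symmetries of `ℝ^N` when `N` has `2`-adic
valuation `4 * m + b`. -/
def symmetryNumber (m : ℕ) (b : Fin 4) : ℕ :=
  ![1, 2, 3, 5] b + 8 * m

theorem hrRho_eq {t : ℚ} {a : ℤ} {b : ℕ} (hb : b < 4) (h : padicValRat 2 t = 4 * a + b) :
    hrRho t = 8 * a + 2 ^ b := by
  have hdiv : padicValRat 2 t / 4 = a := by omega
  have hmod : padicValRat 2 t % 4 = b := by omega
  rw [hrRho, hdiv, hmod, Int.toNat_natCast]

theorem hrRho_half_add_one {m k : ℕ} {b : Fin 4} (hk : Odd k) :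
    hrRho (((2 ^ (4 * m + b : ℕ) * k : ℕ) : ℚ) / 2) + 1 = symmetryNumber m b := by
  have hval : padicValRat 2 (((2 ^ (4 * m + b : ℕ) * k : ℕ) : ℚ) / 2) = 4 * m + b - 1 := by
    have hk₀ : (k : ℚ) ≠ 0 := Nat.cast_ne_zero.2 hk.pos.ne'
    have hkval : padicValNat 2 k = 0 := padicValNat.eq_zero_of_not_dvd hk.not_two_dvd_nat
    have htwo : padicValRat 2 2 = 1 := padicValRat.self one_lt_two
    push_cast
    rw [padicValRat.div (by positivity) two_ne_zero, padicValRat.mul (by positivity) hk₀,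
      padicValRat.pow, htwo, padicValRat.of_nat, hkval]
    push_cast
    ring
  rw [symmetryNumber]
  fin_cases b
  · rw [hrRho_eq (a := m - 1) (b := 3) (by decide) (by rw [hval]; push_cast; ring)]
    change _ = ((1 + 8 * m : ℕ) : ℤ)
    lia
  · rw [hrRho_eq (a := m) (b := 0) (by decide) (by rw [hval]; simp)]
    change _ = ((2 + 8 * m : ℕ) : ℤ)
    lia
  · rw [hrRho_eq (a := m) (b := 1) (by decide) (by rw [hval]; push_cast; ring)]
    change _ = ((3 + 8 * m : ℕ) : ℤ)
    lia
  · rw [hrRho_eq (a := m) (b := 2) (by decide) (by rw [hval]; push_cast; ring)]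
    change _ = ((5 + 8 * m : ℕ) : ℤ)
    lia

theorem hasCliffordModule_symmetryNumber (m : ℕ) (b : Fin 4) :
    HasCliffordModule 1 (symmetryNumber m b) (2 ^ (4 * m + b : ℕ)) 0 := by
  rw [add_comm, pow_add]
  refine .add_eight_mul (.inl rfl) ?_ m
  fin_cases b
  · exact hasCliffordModule_one_one_one
  · exact hasCliffordModule_one_two_two
  · exact hasCliffordModule_one_three_four
  · exact hasCliffordModule_one_five_eight.mono le_rfl (Nat.zero_le 3)

theorem exists_hasCliffordModule_quaternionic (m : ℕ) (b : Fin 4) :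
    ∃ (s : ℝ) (p : ℕ), (s = 1 ∨ s = -1) ∧ HasCliffordModule s (symmetryNumber m b) (2 ^ p) 2 ∧
      symmetryNumber m b + 2 = 4 * m + b + 1 + p := by
  obtain ⟨s, p, hs, hmod, hp⟩ : ∃ (s : ℝ) (p : ℕ), (s = 1 ∨ s = -1) ∧
      HasCliffordModule s (![1, 2, 3, 5] b) (2 ^ p) 2 ∧
        (![1, 2, 3, 5] b : ℕ) + 2 = b + 1 + p := by
    fin_cases b
    · exact ⟨1, 2, .inl rfl, hasCliffordModule_one_one_four.mono le_rfl (by decide), rfl⟩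
    · exact ⟨-1, 2, .inr rfl, hasCliffordModule_neg_one_three_four.mono (by decide) (by decide),
        rfl⟩
    · exact ⟨-1, 2, .inr rfl, hasCliffordModule_neg_one_three_four.mono le_rfl (by decide), rfl⟩
    · exact ⟨1, 3, .inl rfl, hasCliffordModule_one_five_eight.mono le_rfl (by decide), rfl⟩
  refine ⟨s, p + 4 * m, hs, ?_, ?_⟩
  · rw [pow_add]
    exact hmod.add_eight_mul hs m
  · rw [symmetryNumber]
    omega

theorem finrank_le_symmetryNumber {V κ : Type*} [AddCommGroup V] [Module ℝ V] [Fintype κ]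
    [DecidableEq κ] {m k : ℕ} {b : Fin 4} (hk : Odd k)
    (hκ : Fintype.card κ = 2 ^ (4 * m + b : ℕ) * k) (h : ∃ f : V →ₗ[ℝ] Matrix κ κ ℝ,
      (∀ v, (f v)ᵀ = f v) ∧ ∀ v, v ≠ 0 → IsUnit (f v)) :
    Module.finrank ℝ V ≤ symmetryNumber m b := by
  by_contra! hlt
  obtain ⟨f, hsymm, hunit⟩ := h
  obtain ⟨s, p, hs, hmod, hp⟩ := exists_hasCliffordModule_quaternionic m b
  have hdvd := two_pow_dvd_mul_of_linearMap hs hmod hlt hsymm hunit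
  rw [hκ, hp, pow_add _ _ p] at hdvd
  have htwo := Nat.dvd_of_mul_dvd_mul_right (by positivity) hdvd
  rw [pow_succ] at htwo
  exact hk.not_two_dvd_nat (Nat.dvd_of_mul_dvd_mul_left (by positivity) htwo)

end HurwitzRadon

/-- Entry `𝔤 = 𝔤𝔩(N,ℝ)` of the Hurwitz–Radon value theorem:
`ρ⁽¹⁾ = ρ⁽²⁾ = ρ(N/2) + 1`. -/
theorem hurwitzRadon_gl_N_R (N : ℕ) (hN : 1 ≤ N) (n : ℕ) :
    ((∃ f : EuclideanSpace ℝ (Fin n) →ₗ[ℝ] Matrix (Fin N) (Fin N) ℝ,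
        ∀ v, (f v)ᵀ = f v ∧
          (f v) ^ 2 = (‖v‖ ^ 2 : ℝ) • (1 : Matrix (Fin N) (Fin N) ℝ)) ↔
      (∃ f : EuclideanSpace ℝ (Fin n) →ₗ[ℝ] Matrix (Fin N) (Fin N) ℝ,
        (∀ v, (f v)ᵀ = f v) ∧ ∀ v, v ≠ 0 → IsUnit (f v))) ∧
    ((∃ f : EuclideanSpace ℝ (Fin n) →ₗ[ℝ] Matrix (Fin N) (Fin N) ℝ,
        (∀ v, (f v)ᵀ = f v) ∧ ∀ v, v ≠ 0 → IsUnit (f v)) ↔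
      (n : ℤ) ≤ hrRho ((N : ℚ) / 2) + 1) := by
  obtain ⟨a, k, hk, rfl⟩ := Nat.exists_eq_two_pow_mul_odd (Nat.one_le_iff_ne_zero.1 hN)
  obtain ⟨m, b, rfl⟩ : ∃ (m : ℕ) (b : Fin 4), a = 4 * m + b :=
    ⟨a / 4, ⟨a % 4, Nat.mod_lt _ four_pos⟩, (Nat.div_add_mod a 4).symm⟩
  rw [hrRho_half_add_one hk, Nat.cast_le]
  have hlower (hn : n ≤ symmetryNumber m b) := exists_linearMap_sq_of_hasCliffordModule
    (((hasCliffordModule_symmetryNumber m b).mono hn le_rfl).mul_right k)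
  have hupper := finrank_le_symmetryNumber (V := EuclideanSpace ℝ (Fin n)) (m := m) (b := b) hk
    (Fintype.card_fin _)
  rw [finrank_euclideanSpace_fin] at hupper
  exact ⟨⟨exists_symmetric_isUnit_of_exists_sq, hlower ∘ hupper⟩,
    hupper, exists_symmetric_isUnit_of_exists_sq ∘ hlower⟩
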